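/- arXiv:2305.16892 — 5 statements merged into one kernel-verified Lean document; each statement's English description precedes it below -/
import Mathlib

section
/- Let n, N, t, T ∈ ℕ with T ≥ 1, and let δ > 0. Suppose that for all t-sparse vectors v₁,…,v_N ∈ ℝⁿ there exist some i ∈ [N] and x ∈ ℝ^N with ‖x‖₁ ≤ T and ‖vᵢ − Σ_{j≠i} xⱼvⱼ‖₂ ≤ δ·max_{j∈[N]} ‖vⱼ‖₂. Then for every n×n positive definite real matrix Σ whose condition number κ(Σ) := λ_max(Σ)/λ_min(Σ) satisfies κ(Σ) < 1/(4δ²), it holds that 𝒫_{t, 1/(3T)}(Σ) ≤ N·max(1, ⌈log₂ κ(Σ)⌉). -/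
open Matrix MeasureTheory ProbabilityTheory
open scoped BigOperators ENNReal

noncomputable section

/-- `v` has at most `t` nonzero coordinates. -/
def SparseVec {k : ℕ} (t : ℕ) (v : Fin k → ℝ) : Prop := {i | v i ≠ 0}.ncard ≤ t

/-- ⟨x,y⟩_Σ := xᵀ Σ y. -/
def innerSigma {k : ℕ} (A : Matrix (Fin k) (Fin k) ℝ) (x y : Fin k → ℝ) : ℝ := x ⬝ᵥ (A *ᵥ y)

/-- ‖x‖_Σ := √(xᵀ Σ x). -/
def normSigma {k : ℕ} (A : Matrix (Fin k) (Fin k) ℝ) (x : Fin k → ℝ) : ℝ :=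
  Real.sqrt (innerSigma A x x)

/-- Euclidean norm on ℝ^k. -/
def l2norm {k : ℕ} (v : Fin k → ℝ) : ℝ := Real.sqrt (∑ i, v i ^ 2)

/-- ℓ1 norm on ℝ^k. -/
def l1norm {k : ℕ} (v : Fin k → ℝ) : ℝ := ∑ i, |v i|

/-- `V` lists the elements of a `(t,α)`-packing for `A` (distinct `t`-sparse vectors of
positive Σ-norm with pairwise Σ-correlations strictly below `α`). -/
def IsPacking {k : ℕ} (t : ℕ) (α : ℝ) (A : Matrix (Fin k) (Fin k) ℝ) {N : ℕ}
    (V : Fin N → Fin k → ℝ) : Prop :=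
  Function.Injective V ∧ (∀ i, SparseVec t (V i) ∧ 0 < normSigma A (V i)) ∧
    ∀ i j, i ≠ j → |innerSigma A (V i) (V j)| < α * (normSigma A (V i) * normSigma A (V j))

/-- 𝒫_{t,α}(Σ): the supremum of sizes of `(t,α)`-packings (as an element of ℕ ∪ {∞}). -/
def packingNumber {k : ℕ} (t : ℕ) (α : ℝ) (A : Matrix (Fin k) (Fin k) ℝ) : ℝ≥0∞ :=
  sSup {c : ℝ≥0∞ | ∃ (N : ℕ) (V : Fin N → Fin k → ℝ), IsPacking t α A V ∧ c = (N : ℝ≥0∞)}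

/-! Rescale the vectors of a packing to `Σ`-norm `1` and suppose there are `N` of them. The
near-dependency among them has a residual `w = vᵢ - ∑_{j ≠ i} xⱼ vⱼ` that is short in the Euclidean
norm, hence `‖w‖_Σ ≤ δ K` when passing between the two norms costs a factor `K`; for positive
definite `Σ` one may take `K = √κ(Σ)`. On the other hand `⟨vᵢ, w⟩_Σ ≥ 1 - α ‖x‖₁`, so Cauchy–Schwarz
gives `1 - α T ≤ ‖w‖_Σ ≤ δ K`. Thus `δ K + α T < 1` excludes packings of size `N`. -/

section QuadraticForm

variable {k : ℕ} {A : Matrix (Fin k) (Fin k) ℝ}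

lemma innerSigma_eq_toBilin' (A : Matrix (Fin k) (Fin k) ℝ) (x y : Fin k → ℝ) :
    innerSigma A x y = Matrix.toBilin' A x y :=
  (Matrix.toBilin'_apply' A x y).symm

lemma innerSigma_smul_smul (A : Matrix (Fin k) (Fin k) ℝ) (a b : ℝ) (x y : Fin k → ℝ) :
    innerSigma A (a • x) (b • y) = a * b * innerSigma A x y := by
  simp only [innerSigma_eq_toBilin', map_smul, LinearMap.smul_apply, smul_eq_mul]
  ring

lemma innerSigma_sub_sum_smul {ι : Type*} (A : Matrix (Fin k) (Fin k) ℝ) (u z : Fin k → ℝ)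
    (s : Finset ι) (x : ι → ℝ) (v : ι → Fin k → ℝ) :
    innerSigma A u (z - ∑ j ∈ s, x j • v j) =
      innerSigma A u z - ∑ j ∈ s, x j * innerSigma A u (v j) := by
  simp only [innerSigma_eq_toBilin', map_sub, map_sum, map_smul, smul_eq_mul]

lemma normSigma_nonneg (A : Matrix (Fin k) (Fin k) ℝ) (x : Fin k → ℝ) : 0 ≤ normSigma A x :=
  Real.sqrt_nonneg _

lemma normSigma_smul (A : Matrix (Fin k) (Fin k) ℝ) (c : ℝ) (x : Fin k → ℝ) :
    normSigma A (c • x) = |c| * normSigma A x := by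
  rw [normSigma, normSigma, innerSigma_smul_smul, Real.sqrt_mul (mul_self_nonneg c),
    Real.sqrt_mul_self_eq_abs]

lemma innerSigma_self_nonneg (hA : A.PosSemidef) (x : Fin k → ℝ) : 0 ≤ innerSigma A x x := by
  simpa only [innerSigma, star_trivial] using hA.dotProduct_mulVec_nonneg x

lemma sq_normSigma (hA : A.PosSemidef) (x : Fin k → ℝ) :
    normSigma A x ^ 2 = innerSigma A x x :=
  Real.sq_sqrt (innerSigma_self_nonneg hA x)

lemma innerSigma_comm (hA : A.IsHermitian) (x y : Fin k → ℝ) :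
    innerSigma A x y = innerSigma A y x := by
  rw [innerSigma, innerSigma, dotProduct_mulVec, ← mulVec_transpose,
    ← conjTranspose_eq_transpose_of_trivial, hA.eq, dotProduct_comm]

lemma innerSigma_le_normSigma_mul_normSigma (hA : A.PosSemidef) (x y : Fin k → ℝ) :
    innerSigma A x y ≤ normSigma A x * normSigma A y := by
  refine le_of_sq_le_sq ?_ (mul_nonneg (normSigma_nonneg A x) (normSigma_nonneg A y))
  have h := (Matrix.toBilin' A).apply_mul_apply_le_of_forall_zero_le
    (fun z ↦ innerSigma_eq_toBilin' A z z ▸ innerSigma_self_nonneg hA z) x y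
  simp only [← innerSigma_eq_toBilin'] at h
  rwa [innerSigma_comm hA.1 y x, ← sq, ← sq_normSigma hA x, ← sq_normSigma hA y, ← mul_pow] at h

lemma one_sub_mul_sum_abs_le_normSigma_sub_sum {ι : Type*} (hA : A.PosSemidef) {α : ℝ}
    {u : Fin k → ℝ} (hu : normSigma A u = 1) {s : Finset ι} {v : ι → Fin k → ℝ}
    (huv : ∀ j ∈ s, |innerSigma A u (v j)| ≤ α) (x : ι → ℝ) :
    1 - α * ∑ j ∈ s, |x j| ≤ normSigma A (u - ∑ j ∈ s, x j • v j) := by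
  have hsum : ∑ j ∈ s, x j * innerSigma A u (v j) ≤ α * ∑ j ∈ s, |x j| := by
    rw [Finset.mul_sum]
    refine Finset.sum_le_sum fun j hj ↦ (le_abs_self _).trans ?_
    rw [abs_mul, mul_comm]
    exact mul_le_mul_of_nonneg_right (huv j hj) (abs_nonneg _)
  calc 1 - α * ∑ j ∈ s, |x j|
      ≤ 1 - ∑ j ∈ s, x j * innerSigma A u (v j) := by gcongr
    _ = innerSigma A u (u - ∑ j ∈ s, x j • v j) := by
      rw [innerSigma_sub_sum_smul, ← sq_normSigma hA, hu, one_pow]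
    _ ≤ normSigma A u * normSigma A (u - ∑ j ∈ s, x j • v j) :=
      innerSigma_le_normSigma_mul_normSigma hA _ _
    _ = normSigma A (u - ∑ j ∈ s, x j • v j) := by rw [hu, one_mul]

end QuadraticForm

section EigenvalueBounds

open scoped MatrixOrder

variable {k : ℕ} {A B : Matrix (Fin k) (Fin k) ℝ}

lemma l2norm_nonneg (x : Fin k → ℝ) : 0 ≤ l2norm x :=
  Real.sqrt_nonneg _

lemma l2norm_pos {x : Fin k → ℝ} (hx : x ≠ 0) : 0 < l2norm x := by
  obtain ⟨i, hi⟩ := Function.ne_iff.1 hx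
  exact Real.sqrt_pos.2
    (Finset.sum_pos' (fun j _ ↦ sq_nonneg (x j)) ⟨i, Finset.mem_univ i, sq_pos_of_ne_zero hi⟩)

lemma normSigma_mono (hAB : A ≤ B) (x : Fin k → ℝ) : normSigma A x ≤ normSigma B x := by
  refine Real.sqrt_le_sqrt (sub_nonneg.1 ?_)
  simpa only [innerSigma, sub_mulVec, dotProduct_sub] using
    innerSigma_self_nonneg (Matrix.le_iff.1 hAB) x

lemma normSigma_algebraMap (c : ℝ) (x : Fin k → ℝ) :
    normSigma (algebraMap ℝ (Matrix (Fin k) (Fin k) ℝ) c) x = √c * l2norm x := by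
  have h : innerSigma (algebraMap ℝ (Matrix (Fin k) (Fin k) ℝ) c) x x = c * ∑ i, x i ^ 2 := by
    simp only [innerSigma, Algebra.algebraMap_eq_smul_one, smul_mulVec, one_mulVec,
      dotProduct_smul, smul_eq_mul]
    simp only [dotProduct, sq]
  rw [normSigma, h, l2norm, Real.sqrt_mul' _ (by positivity)]

lemma normSigma_le_sqrt_iSup_eigenvalues_mul_l2norm (hA : A.IsHermitian) (x : Fin k → ℝ) :
    normSigma A x ≤ √(⨆ i, hA.eigenvalues i) * l2norm x := by
  rw [← normSigma_algebraMap]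
  refine normSigma_mono (le_algebraMap_of_spectrum_le ?_ hA.isSelfAdjoint) x
  rw [hA.spectrum_real_eq_range_eigenvalues, Set.forall_mem_range]
  exact le_ciSup (Set.finite_range _).bddAbove

lemma sqrt_iInf_eigenvalues_mul_l2norm_le_normSigma (hA : A.IsHermitian) (x : Fin k → ℝ) :
    √(⨅ i, hA.eigenvalues i) * l2norm x ≤ normSigma A x := by
  rw [← normSigma_algebraMap]
  refine normSigma_mono (algebraMap_le_of_le_spectrum ?_ hA.isSelfAdjoint) x
  rw [hA.spectrum_real_eq_range_eigenvalues, Set.forall_mem_range]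
  exact ciInf_le (Set.finite_range _).bddBelow

lemma normSigma_mul_l2norm_le_sqrt_condition_number_mul (hA : A.PosDef) (x y : Fin k → ℝ) :
    normSigma A x * l2norm y ≤
      √((⨆ i, hA.1.eigenvalues i) / ⨅ i, hA.1.eigenvalues i) * (l2norm x * normSigma A y) := by
  rcases isEmpty_or_nonempty (Fin k) with hk | hk
  · simp [l2norm]
  have hmin : 0 < ⨅ i, hA.1.eigenvalues i := by
    obtain ⟨i, hi⟩ := exists_eq_ciInf_of_finite (f := hA.1.eigenvalues)
    exact hi ▸ hA.eigenvalues_pos i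
  rw [Real.sqrt_div' _ hmin.le, div_mul_eq_mul_div, le_div_iff₀ (Real.sqrt_pos.2 hmin)]
  calc normSigma A x * l2norm y * √(⨅ i, hA.1.eigenvalues i)
      = normSigma A x * (√(⨅ i, hA.1.eigenvalues i) * l2norm y) := by ring
    _ ≤ (√(⨆ i, hA.1.eigenvalues i) * l2norm x) * normSigma A y :=
      mul_le_mul (normSigma_le_sqrt_iSup_eigenvalues_mul_l2norm hA.1 x)
        (sqrt_iInf_eigenvalues_mul_l2norm_le_normSigma hA.1 y)
        (mul_nonneg (Real.sqrt_nonneg _) (l2norm_nonneg y))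
        (mul_nonneg (Real.sqrt_nonneg _) (l2norm_nonneg x))
    _ = √(⨆ i, hA.1.eigenvalues i) * (l2norm x * normSigma A y) := by ring

end EigenvalueBounds

section Packing

variable {k t M N : ℕ} {α : ℝ} {A : Matrix (Fin k) (Fin k) ℝ}

lemma SparseVec.smul {v : Fin k → ℝ} (hv : SparseVec t v) (c : ℝ) : SparseVec t (c • v) :=
  (Set.ncard_le_ncard (fun _ hi ↦ right_ne_zero_of_mul hi) (Set.toFinite _)).trans hv

lemma IsPacking.comp {V : Fin N → Fin k → ℝ} (hV : IsPacking t α A V) {f : Fin M → Fin N}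
    (hf : Function.Injective f) : IsPacking t α A (V ∘ f) :=
  ⟨hV.1.comp hf, fun i ↦ hV.2.1 (f i), fun _ _ hij ↦ hV.2.2 _ _ (hf.ne hij)⟩

lemma IsPacking.exists_normSigma_eq_one {V : Fin N → Fin k → ℝ} (hV : IsPacking t α A V) :
    ∃ v : Fin N → Fin k → ℝ, (∀ i, SparseVec t (v i)) ∧ (∀ i, normSigma A (v i) = 1) ∧
      ∀ i j, i ≠ j → |innerSigma A (v i) (v j)| < α := by
  obtain ⟨-, hsparse, hcorr⟩ := hV
  have hpos (i : Fin N) : 0 < normSigma A (V i) := (hsparse i).2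
  refine ⟨fun i ↦ (normSigma A (V i))⁻¹ • V i, fun i ↦ (hsparse i).1.smul _, fun i ↦ ?_,
    fun i j hij ↦ ?_⟩
  · rw [normSigma_smul, abs_of_pos (inv_pos.2 (hpos i)), inv_mul_cancel₀ (hpos i).ne']
  · have hij_pos : 0 < normSigma A (V i) * normSigma A (V j) := mul_pos (hpos i) (hpos j)
    rw [innerSigma_smul_smul, ← mul_inv, abs_mul, abs_of_pos (inv_pos.2 hij_pos),
      inv_mul_lt_iff₀ hij_pos, mul_comm]
    exact hcorr i j hij

lemma packingNumber_lt_of_forall_not_isPacking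
    (h : ∀ V : Fin N → Fin k → ℝ, ¬ IsPacking t α A V) : packingNumber t α A < N := by
  rcases N with - | N
  · exact (h Fin.elim0 ⟨Function.injective_of_subsingleton _, Fin.rec0, Fin.rec0⟩).elim
  have hle : packingNumber t α A ≤ N := by
    refine sSup_le ?_
    rintro _ ⟨M, V, hV, rfl⟩
    refine Nat.cast_le.2 (not_lt.1 fun hNM ↦ ?_)
    exact h _ (hV.comp (Fin.castLE_injective hNM))
  exact hle.trans_lt (Nat.cast_lt.2 N.lt_succ_self)

lemma normSigma_le_mul_of_l2norm_le_mul_iSup {ι : Type*} [Finite ι] [Nonempty ι]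
    {v : ι → Fin k → ℝ} (hv : ∀ j, normSigma A (v j) = 1) {K δ : ℝ}
    (hK : ∀ x j, normSigma A x * l2norm (v j) ≤ K * (l2norm x * normSigma A (v j)))
    {w : Fin k → ℝ} (hw : l2norm w ≤ δ * ⨆ j, l2norm (v j)) : normSigma A w ≤ δ * K := by
  obtain ⟨m, hm⟩ := exists_eq_ciSup_of_finite (f := fun j ↦ l2norm (v j))
  rw [← hm] at hw
  have hm_pos : 0 < l2norm (v m) := l2norm_pos fun h0 ↦ by
    simpa [h0, normSigma, innerSigma] using hv m
  simp only [hv, mul_one] at hK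
  have hK_pos : 0 < K := by
    refine pos_of_mul_pos_left ?_ hm_pos.le
    calc 0 < normSigma A (v m) * l2norm (v m) := by rwa [hv, one_mul]
      _ ≤ K * l2norm (v m) := hK (v m) m
  refine le_of_mul_le_mul_right ?_ hm_pos
  calc normSigma A w * l2norm (v m) ≤ K * l2norm w := hK w m
    _ ≤ K * (δ * l2norm (v m)) := by gcongr
    _ = δ * K * l2norm (v m) := by ring

end Packing

lemma mul_sqrt_add_one_div_three_mul_lt_one {δ κ T : ℝ} (hδ : 0 < δ) (hκ : κ < 1 / (4 * δ ^ 2))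
    (hT : T ≠ 0) : δ * √κ + 1 / (3 * T) * T < 1 := by
  have hhalf : δ * √κ < 1 / 2 := by
    rw [← lt_div_iff₀' hδ, Real.sqrt_lt' (by positivity)]
    convert hκ using 1
    field_simp
    norm_num
  have hthird : 1 / (3 * T) * T = 1 / 3 := by field_simp
  linarith

lemma le_mul_ofReal_max_one (x : ℝ≥0∞) (m : ℤ) :
    x ≤ x * ENNReal.ofReal ((max 1 m : ℤ) : ℝ) :=
  le_mul_of_one_le_right' (ENNReal.one_le_ofReal.2 (by exact_mod_cast le_max_left 1 m))

theorem stmt10_general {n N t : ℕ} {T δ α K : ℝ} (hα : 0 ≤ α)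
    (hyp : ∀ v : Fin N → Fin n → ℝ, (∀ i, SparseVec t (v i)) →
      ∃ (i : Fin N) (x : Fin N → ℝ), l1norm x ≤ T ∧
        l2norm (v i - ∑ j ∈ Finset.univ.erase i, x j • v j) ≤ δ * ⨆ j, l2norm (v j))
    {A : Matrix (Fin n) (Fin n) ℝ} (hA : A.PosSemidef)
    (hK : ∀ x y, SparseVec t y → normSigma A x * l2norm y ≤ K * (l2norm x * normSigma A y))
    (hlt : δ * K + α * T < 1) : packingNumber t α A < N := by
  refine packingNumber_lt_of_forall_not_isPacking fun V hV ↦ ?_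
  obtain ⟨v, hsparse, hunit, hcorr⟩ := hV.exists_normSigma_eq_one
  obtain ⟨i, x, hx, hw⟩ := hyp v hsparse
  have : Nonempty (Fin N) := ⟨i⟩
  have hupper : normSigma A (v i - ∑ j ∈ Finset.univ.erase i, x j • v j) ≤ δ * K :=
    normSigma_le_mul_of_l2norm_le_mul_iSup hunit (fun y j ↦ hK y (v j) (hsparse j)) hw
  have hlower : 1 - α * ∑ j ∈ Finset.univ.erase i, |x j| ≤ _ :=
    one_sub_mul_sum_abs_le_normSigma_sub_sum hA (hunit i)
      (fun j hj ↦ (hcorr i j (Finset.ne_of_mem_erase hj).symm).le) x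
  have hl1 : ∑ j ∈ Finset.univ.erase i, |x j| ≤ T :=
    (Finset.sum_le_univ_sum_of_nonneg fun j ↦ abs_nonneg (x j)).trans hx
  have hαT : α * ∑ j ∈ Finset.univ.erase i, |x j| ≤ α * T := by gcongr
  linarith

/-- the dual-certificate bound on the packing number. -/
theorem stmt10 (n N t T : ℕ) (hT : 1 ≤ T) (δ : ℝ) (hδ : 0 < δ)
    (hyp : ∀ v : Fin N → Fin n → ℝ, (∀ i, SparseVec t (v i)) →
      ∃ (i : Fin N) (x : Fin N → ℝ), l1norm x ≤ (T : ℝ) ∧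
        l2norm (v i - ∑ j ∈ Finset.univ.erase i, x j • v j) ≤ δ * ⨆ j, l2norm (v j)) :
    ∀ (A : Matrix (Fin n) (Fin n) ℝ) (hA : A.PosDef) (κ : ℝ),
      κ = (⨆ i, hA.1.eigenvalues i) / (⨅ i, hA.1.eigenvalues i) →
      κ < 1 / (4 * δ ^ 2) →
      packingNumber t (1 / (3 * T)) A ≤
        (N : ℝ≥0∞) * ENNReal.ofReal ((max 1 ⌈Real.logb 2 κ⌉ : ℤ) : ℝ) := by
  intro A hA κ hκ hκδ
  have hlt := mul_sqrt_add_one_div_three_mul_lt_one hδ hκδ (Nat.cast_ne_zero.2 (by lia : T ≠ 0))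
  exact (stmt10_general (by positivity) hyp hA.posSemidef
    (fun x y _ ↦ hκ ▸ normSigma_mul_l2norm_le_sqrt_condition_number_mul hA x y) hlt).le.trans
      (le_mul_ofReal_max_one _ _)
end
end

section
/- Let n, N, t ∈ ℕ with t ≥ 1 and N ≥ 1, and let v₁,…,v_N ∈ {0,1}ⁿ be t-sparse binary vectors. Then there exist some i ∈ [N] and x ∈ ℝ^N such that ‖x‖₁ ≤ 3ᵗ and ‖vᵢ − Σ_{j≠i} xⱼvⱼ‖₂ ≤ 4ᵗ·√(9t·(tn/N)^{1/t}). -/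
open Matrix MeasureTheory ProbabilityTheory
open scoped BigOperators ENNReal

noncomputable section

/-!
Call a set `T` heavy if many of the supports contain it, the threshold dropping by a factor `δ`
for each additional element of `T`. If `T` is maximal among the heavy sets, no coordinate
outside `T` lies in more than a `2δ` fraction of the supports containing `T`, so the average of
their vectors is within `√(2δt)` of the indicator of `T`; this survives the removal of any one
of them. A counting argument produces a nonempty heavy set as long as there are at least about
`n δ^(-(t - 1))` supports, so all but few of the supports contain such a core `T`. Deleting the
cores gives `(t - 1)`-sparse vectors, one of which is, by induction, a combination of the others
up to an error. Each of these is an original vector minus its core, and replacing every core by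
its approximation takes the `ℓ¹` norm from `c` to `2 c + 1`, whence `2 ^ t - 1` after `t`
rounds. The choice `δ = (tn/N)^(1/t)` leaves enough vectors for every round; for `δ ≥ 1/2` the
zero combination is already good enough.
-/

section Approximation

variable {ι E : Type*} [SeminormedAddCommGroup E] [NormedSpace ℝ E]

/-- `u` is within `ε` of a linear combination of the vectors `v k`, `k ∈ A`, whose coefficients
have `ℓ¹` norm at most `c`. Values of the coefficients outside `A` are irrelevant. -/
def IsApproxBy (v : ι → E) (A : Finset ι) (c ε : ℝ) (u : E) : Prop :=
  ∃ x : ι → ℝ, ∑ k ∈ A, |x k| ≤ c ∧ ‖u - ∑ k ∈ A, x k • v k‖ ≤ ε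

variable {v p : ι → E} {A B : Finset ι} {c c' d ε ε' η : ℝ} {u u' : E}

namespace IsApproxBy

theorem coeff_nonneg (h : IsApproxBy v A c ε u) : 0 ≤ c :=
  let ⟨_, hx, _⟩ := h
  (Finset.sum_nonneg fun _ _ => abs_nonneg _).trans hx

theorem error_nonneg (h : IsApproxBy v A c ε u) : 0 ≤ ε :=
  let ⟨_, _, hx⟩ := h
  (norm_nonneg _).trans hx

theorem mono_bounds (h : IsApproxBy v A c ε u) (hc : c ≤ c') (hε : ε ≤ ε') :
    IsApproxBy v A c' ε' u :=
  let ⟨x, hx, hu⟩ := h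
  ⟨x, hx.trans hc, hu.trans hε⟩

theorem mono_set (h : IsApproxBy v A c ε u) (hAB : A ⊆ B) : IsApproxBy v B c ε u := by
  classical
  obtain ⟨x, hx, hu⟩ := h
  refine ⟨fun k => if k ∈ A then x k else 0, ?_, ?_⟩
  · simpa only [apply_ite abs, abs_zero, Finset.sum_ite_mem,
      Finset.inter_eq_right.mpr hAB] using hx
  · simpa only [ite_smul, zero_smul, Finset.sum_ite_mem,
      Finset.inter_eq_right.mpr hAB] using hu

theorem of_norm_le (hu : ‖u‖ ≤ ε) : IsApproxBy v A 0 ε u :=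
  ⟨0, by simp, by simpa using hu⟩

theorem linearCombination (v : ι → E) (A : Finset ι) (x : ι → ℝ) :
    IsApproxBy v A (∑ k ∈ A, |x k|) 0 (∑ k ∈ A, x k • v k) :=
  ⟨x, le_rfl, by simp⟩

theorem add (h : IsApproxBy v A c ε u) (h' : IsApproxBy v A c' ε' u') :
    IsApproxBy v A (c + c') (ε + ε') (u + u') := by
  obtain ⟨x, hx, hu⟩ := h
  obtain ⟨x', hx', hu'⟩ := h'
  refine ⟨x + x', ?_, ?_⟩
  · calc ∑ k ∈ A, |x k + x' k| ≤ ∑ k ∈ A, (|x k| + |x' k|) :=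
          Finset.sum_le_sum fun _ _ => abs_add_le _ _
      _ ≤ c + c' := by rw [Finset.sum_add_distrib]; exact add_le_add hx hx'
  · simp only [Pi.add_apply, add_smul, Finset.sum_add_distrib, add_sub_add_comm]
    exact norm_add_le_of_le hu hu'

theorem const_smul (h : IsApproxBy v A c ε u) (a : ℝ) :
    IsApproxBy v A (|a| * c) (|a| * ε) (a • u) := by
  obtain ⟨x, hx, hu⟩ := h
  refine ⟨a • x, ?_, ?_⟩
  · simp only [Pi.smul_apply, smul_eq_mul, abs_mul, ← Finset.mul_sum]
    gcongr
  · simp only [Pi.smul_apply, smul_assoc, ← Finset.smul_sum, ← smul_sub, norm_smul,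
      Real.norm_eq_abs]
    gcongr

theorem sum_smul (x : ι → ℝ) (hp : ∀ k ∈ A, IsApproxBy v B d η (p k)) :
    IsApproxBy v B ((∑ k ∈ A, |x k|) * d) ((∑ k ∈ A, |x k|) * η) (∑ k ∈ A, x k • p k) := by
  classical
  induction A using Finset.induction_on with
  | empty => simpa using of_norm_le (v := v) (A := B) norm_zero.le
  | insert a A ha ih =>
    simp only [Finset.sum_insert ha, add_mul]
    exact ((hp a (Finset.mem_insert_self a A)).const_smul (x a)).add
      (ih fun k hk => hp k (Finset.mem_insert_of_mem hk))

theorem of_residual {r : ι → E} {w : E} (hAB : A ⊆ B) (hr : IsApproxBy r A c ε w)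
    (hv : ∀ k ∈ A, IsApproxBy v B d η (v k - r k)) (hu : IsApproxBy v B d η (u - w)) :
    IsApproxBy v B (c + c * d + d) (ε + (c + 1) * η) u := by
  have hd := hu.coeff_nonneg
  have hη := hu.error_nonneg
  obtain ⟨x, hx, hw⟩ := hr
  have happrox := (((of_norm_le hw).add ((linearCombination v A x).mono_set hAB)).add
    (sum_smul (-x) hv)).add hu
  have hsplit : w - ∑ k ∈ A, x k • r k + ∑ k ∈ A, x k • v k
      + ∑ k ∈ A, (-x) k • (v k - r k) + (u - w) = u := by
    simp only [Pi.neg_apply, smul_sub, Finset.sum_sub_distrib, neg_smul, Finset.sum_neg_distrib]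
    abel
  rw [hsplit] at happrox
  simp only [Pi.neg_apply, abs_neg] at happrox
  refine happrox.mono_bounds ?_ ?_
  · rw [zero_add]
    gcongr
  · calc ε + 0 + (∑ k ∈ A, |x k|) * η + η ≤ ε + 0 + c * η + η := by gcongr
      _ = ε + (c + 1) * η := by ring

end IsApproxBy

end Approximation

section Indicator

variable {κ : Type*}

/-- The `0`-`1` vector of a finite set of coordinates, as a point of Euclidean space. -/
def indicatorVec (T : Finset κ) : EuclideanSpace ℝ κ :=
  WithLp.toLp 2 ((T : Set κ).indicator 1)

theorem indicatorVec_apply [DecidableEq κ] (T : Finset κ) (b : κ) :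
    indicatorVec T b = if b ∈ T then 1 else 0 := by
  simp [indicatorVec, Set.indicator_apply]

theorem indicatorVec_sdiff [DecidableEq κ] {S T : Finset κ} (h : T ⊆ S) :
    indicatorVec (S \ T) = indicatorVec S - indicatorVec T := by
  ext b
  by_cases hT : b ∈ T <;> simp [indicatorVec_apply, hT, @h b]

theorem norm_indicatorVec [Fintype κ] (T : Finset κ) : ‖indicatorVec T‖ = √(T.card : ℝ) := by
  classical
  simp [EuclideanSpace.norm_eq, indicatorVec_apply]

variable [DecidableEq κ] {ι : Type*} {S : ι → Finset κ} {G : Finset ι} {T : Finset κ} {p : ℝ}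

theorem average_indicatorVec_apply (S : ι → Finset κ) (G : Finset ι) (b : κ) :
    (∑ j ∈ G, (G.card : ℝ)⁻¹ • indicatorVec (S j)) b =
      ((G.filter (b ∈ S ·)).card : ℝ) / G.card := by
  simp [← Finset.smul_sum, indicatorVec_apply, div_eq_inv_mul]

theorem sq_sub_average_indicatorVec_apply_le (hp : 0 ≤ p) (hG : G.Nonempty)
    (hT : ∀ j ∈ G, T ⊆ S j)
    (hdeg : ∀ b ∉ T, ((G.filter (b ∈ S ·)).card : ℝ) ≤ p * G.card) (b : κ) :
    (indicatorVec T - ∑ j ∈ G, (G.card : ℝ)⁻¹ • indicatorVec (S j)) b ^ 2 ≤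
      p * (((G.filter (b ∈ S ·)).card : ℝ) / G.card) := by
  have hG₀ : (0 : ℝ) < G.card := mod_cast hG.card_pos
  rw [PiLp.sub_apply, average_indicatorVec_apply, indicatorVec_apply]
  split_ifs with hb
  · rw [Finset.filter_true_of_mem fun j hj => hT j hj hb, div_self hG₀.ne']
    simpa using hp
  · rw [zero_sub, neg_sq, sq]
    gcongr
    exact (div_le_iff₀ hG₀).mpr (hdeg b hb)

variable [Fintype κ]

theorem sum_card_filter_mem_eq (S : ι → Finset κ) (G : Finset ι) :
    ∑ b, (G.filter (b ∈ S ·)).card = ∑ j ∈ G, (S j).card := by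
  simpa [Finset.bipartiteAbove, Finset.bipartiteBelow] using
    Finset.sum_card_bipartiteAbove_eq_sum_card_bipartiteBelow
      (s := Finset.univ) (t := G) fun b j => b ∈ S j

theorem isApproxBy_indicatorVec_of_card_filter_le {r : ℕ} (hp : 0 ≤ p) (hG : G.Nonempty)
    (hT : ∀ j ∈ G, T ⊆ S j) (hr : ∀ j ∈ G, (S j).card ≤ r)
    (hdeg : ∀ b ∉ T, ((G.filter (b ∈ S ·)).card : ℝ) ≤ p * G.card) :
    IsApproxBy (indicatorVec ∘ S) G 1 √(p * r) (indicatorVec T) := by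
  have hG₀ : (0 : ℝ) < G.card := mod_cast hG.card_pos
  refine ⟨fun _ => (G.card : ℝ)⁻¹, by simp [hG₀.ne'], ?_⟩
  rw [EuclideanSpace.norm_eq]
  refine Real.sqrt_le_sqrt ?_
  simp only [Real.norm_eq_abs, sq_abs]
  calc _ ≤ ∑ b, p * (((G.filter (b ∈ S ·)).card : ℝ) / G.card) :=
        Finset.sum_le_sum fun b _ => sq_sub_average_indicatorVec_apply_le hp hG hT hdeg b
    _ = p * ((∑ j ∈ G, (S j).card : ℕ) / G.card) := by
        rw [← Finset.mul_sum, ← Finset.sum_div, ← sum_card_filter_mem_eq, Nat.cast_sum]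
    _ ≤ p * r := by
        gcongr
        rw [div_le_iff₀ hG₀, mul_comm]
        exact_mod_cast Finset.sum_le_card_nsmul G _ r hr

end Indicator

section HeavySets

variable {ι κ : Type*} [DecidableEq κ]

/-- The star of `T` in the family `(S j)_{j ∈ I}`: the indices of the members containing `T`. -/
def familyStar (S : ι → Finset κ) (I : Finset ι) (T : Finset κ) : Finset ι :=
  I.filter (T ⊆ S ·)

/-- `T` is heavy if at least `1 + δ ^ (-(r - |T|))` members of the family contain it; the condition
is multiplied out so as to make sense for `δ = 0`. It is meant for families of sets of size at most
`r`, so that the truncated subtraction is exact on subsets of members. -/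
def IsHeavy (S : ι → Finset κ) (I : Finset ι) (δ : ℝ) (r : ℕ) (T : Finset κ) : Prop :=
  1 ≤ δ ^ (r - T.card) * ((familyStar S I T).card - 1)

variable {S : ι → Finset κ} {I : Finset ι} {δ : ℝ} {r : ℕ} {T : Finset κ}

theorem IsHeavy.one_lt_card_familyStar (hδ : 0 ≤ δ) (h : IsHeavy S I δ r T) :
    1 < (familyStar S I T).card := by
  have : 0 < ((familyStar S I T).card : ℝ) - 1 :=
    pos_of_mul_pos_right (zero_lt_one.trans_le h) (by positivity)
  exact_mod_cast sub_pos.mp this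

theorem IsHeavy.exists_maximal [Finite κ] {T₀ : Finset κ} (h : IsHeavy S I δ r T₀) :
    ∃ T, T₀ ⊆ T ∧ IsHeavy S I δ r T ∧ ∀ b ∉ T, ¬ IsHeavy S I δ r (insert b T) := by
  obtain ⟨T, hT₀, hT⟩ := (Set.toFinite {T | IsHeavy S I δ r T}).exists_le_maximal h
  exact ⟨T, hT₀, hT.prop, fun b hb hbT =>
    hb (hT.le_of_ge hbT (Finset.subset_insert b T) (Finset.mem_insert_self b T))⟩

theorem IsHeavy.card_familyStar_insert_le (hδ : 0 ≤ δ) (hδ₁ : δ ≤ 1) (h : IsHeavy S I δ r T)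
    (hr : ∀ j ∈ I, (S j).card ≤ r) {b : κ} (hb : b ∉ T) (hlight : ¬ IsHeavy S I δ r (insert b T)) :
    ((familyStar S I (insert b T)).card : ℝ) ≤ 2 * δ * ((familyStar S I T).card - 1) := by
  have hm : 1 < ((familyStar S I T).card : ℝ) := mod_cast h.one_lt_card_familyStar hδ
  rcases (familyStar S I (insert b T)).eq_empty_or_nonempty with hempty | ⟨j, hj⟩
  · rw [hempty, Finset.card_empty, Nat.cast_zero]
    have := sub_pos.mpr hm
    positivity
  have hcard : T.card + 1 ≤ r := by
    rw [familyStar, Finset.mem_filter] at hj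
    rw [← Finset.card_insert_of_notMem hb]
    exact (Finset.card_le_card hj.2).trans (hr j hj.1)
  obtain ⟨e, rfl⟩ := Nat.exists_eq_add_of_le hcard
  rw [IsHeavy, Finset.card_insert_of_notMem hb, Nat.add_sub_cancel_left, not_le] at hlight
  rw [IsHeavy, show T.card + 1 + e - T.card = e + 1 by omega, pow_succ, mul_assoc] at h
  have hlt := lt_of_mul_lt_mul_left (hlight.trans_le h) (by positivity)
  have hge : 1 ≤ δ * ((familyStar S I T).card - 1) :=
    h.trans (mul_le_of_le_one_left (mul_nonneg hδ (sub_pos.mpr hm).le) (pow_le_one₀ hδ hδ₁))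
  linarith

theorem IsHeavy.isApproxBy_indicatorVec [Fintype κ] [DecidableEq ι] (hδ : 0 ≤ δ) (hδ₁ : δ ≤ 1)
    (h : IsHeavy S I δ r T) (hr : ∀ j ∈ I, (S j).card ≤ r)
    (hmax : ∀ b ∉ T, ¬ IsHeavy S I δ r (insert b T)) (i : ι) :
    IsApproxBy (indicatorVec ∘ S) ((familyStar S I T).erase i) 1 √(2 * δ * r) (indicatorVec T) := by
  have hmem {j : ι} (hj : j ∈ (familyStar S I T).erase i) : j ∈ I ∧ T ⊆ S j :=
    Finset.mem_filter.mp (Finset.mem_of_mem_erase hj)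
  refine isApproxBy_indicatorVec_of_card_filter_le (by positivity)
    ((Finset.one_lt_card_iff_nontrivial.mp (h.one_lt_card_familyStar hδ)).erase_nonempty)
    (fun j hj => (hmem hj).2) (fun j hj => hr j (hmem hj).1) fun b hb => ?_
  have hsub : ((familyStar S I T).erase i).filter (b ∈ S ·) ⊆ familyStar S I (insert b T) := by
    intro j hj
    obtain ⟨hj, hbj⟩ := Finset.mem_filter.mp hj
    exact Finset.mem_filter.mpr ⟨(hmem hj).1, Finset.insert_subset hbj (hmem hj).2⟩
  have hpred : ((familyStar S I T).card : ℝ) - 1 ≤ ((familyStar S I T).erase i).card := by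
    rw [sub_le_iff_le_add]
    exact_mod_cast Nat.sub_le_iff_le_add.mp Finset.pred_card_le_card_erase
  calc ((((familyStar S I T).erase i).filter (b ∈ S ·)).card : ℝ)
      ≤ (familyStar S I (insert b T)).card := mod_cast Finset.card_le_card hsub
    _ ≤ 2 * δ * ((familyStar S I T).card - 1) :=
        h.card_familyStar_insert_le hδ hδ₁ hr hb (hmax b hb)
    _ ≤ 2 * δ * ((familyStar S I T).erase i).card := by gcongr

theorem exists_isHeavy_singleton [Fintype κ] {s : ℕ} (hδ : 0 ≤ δ) (hI : I.Nonempty)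
    (hne : ∀ j ∈ I, (S j).Nonempty)
    (hcard : Fintype.card κ * (1 + δ ^ s) ≤ δ ^ s * I.card) :
    ∃ b, IsHeavy S I δ (s + 1) {b} := by
  by_contra! hlight
  obtain ⟨j, hj⟩ := hI
  have : Nonempty κ := (hne j hj).to_type
  have hdeg : ∀ b, δ ^ s * (I.filter (b ∈ S ·)).card < 1 + δ ^ s := fun b => by
    have := hlight b
    simp only [IsHeavy, familyStar, Finset.card_singleton, Nat.add_sub_cancel,
      Finset.singleton_subset_iff, not_le, mul_sub, mul_one] at this
    linarith
  have hle : I.card ≤ ∑ j ∈ I, (S j).card := by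
    rw [Finset.card_eq_sum_ones]
    exact Finset.sum_le_sum fun j hj => (hne j hj).card_pos
  refine hcard.not_gt ?_
  calc δ ^ s * I.card ≤ δ ^ s * (∑ b, (I.filter (b ∈ S ·)).card : ℕ) := by
        rw [sum_card_filter_mem_eq]; gcongr
    _ = ∑ b, δ ^ s * (I.filter (b ∈ S ·)).card := by rw [Nat.cast_sum, Finset.mul_sum]
    _ < ∑ _b : κ, (1 + δ ^ s) :=
        Finset.sum_lt_sum_of_nonempty Finset.univ_nonempty fun b _ => hdeg b
    _ = Fintype.card κ * (1 + δ ^ s) := by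
        rw [Finset.sum_const, nsmul_eq_mul, Finset.card_univ]

end HeavySets

section Cores

variable {ι κ : Type*} [DecidableEq ι] [Fintype κ]

/-- `T` is a core of `R` in the family `(S j)_{j ∈ I}`: a nonempty part of `R` that is, whichever
index is left out, within `ε` of a combination of the remaining members with coefficients of `ℓ¹`
norm at most `1`. -/
structure IsCore (S : ι → Finset κ) (I : Finset ι) (ε : ℝ) (R T : Finset κ) : Prop where
  subset : T ⊆ R
  nonempty : T.Nonempty
  isApproxBy : ∀ i, IsApproxBy (indicatorVec ∘ S) (I.erase i) 1 ε (indicatorVec T)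

variable {S : ι → Finset κ} {I : Finset ι} {δ : ℝ} {s : ℕ}

theorem IsCore.mono {I' : Finset ι} {ε : ℝ} {R T : Finset κ} (h : IsCore S I' ε R T)
    (hI : I' ⊆ I) : IsCore S I ε R T :=
  ⟨h.subset, h.nonempty, fun i => (h.isApproxBy i).mono_set (Finset.erase_subset_erase i hI)⟩

theorem exists_isCore (hδ : 0 ≤ δ) (hδ₁ : δ ≤ 1) (hI : I.Nonempty)
    (hs : ∀ j ∈ I, (S j).card ≤ s + 1) (hne : ∀ j ∈ I, (S j).Nonempty)
    (hcard : Fintype.card κ * (1 + δ ^ s) ≤ δ ^ s * I.card) :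
    ∃ j ∈ I, ∃ T, IsCore S I √(2 * δ * (s + 1 : ℕ)) (S j) T := by
  classical
  obtain ⟨b, hb⟩ := exists_isHeavy_singleton hδ hI hne hcard
  obtain ⟨T, hbT, hT, hmax⟩ := hb.exists_maximal
  obtain ⟨j, hj⟩ := Finset.card_pos.mp (zero_lt_one.trans (hT.one_lt_card_familyStar hδ))
  obtain ⟨hjI, hTj⟩ := Finset.mem_filter.mp hj
  exact ⟨j, hjI, T, hTj, (Finset.singleton_nonempty b).mono hbT, fun i =>
    (hT.isApproxBy_indicatorVec hδ hδ₁ hs hmax i).mono_set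
      (Finset.erase_subset_erase i (Finset.filter_subset _ I))⟩

theorem card_lt_of_forall_not_isCore (hδ : 0 ≤ δ) (hδ₁ : δ ≤ 1) (hI : I.Nonempty)
    (hs : ∀ j ∈ I, (S j).card ≤ s + 1) (hne : ∀ j ∈ I, (S j).Nonempty) {I' : Finset ι}
    (hI' : I' ⊆ I) (hcore : ∀ j ∈ I', ¬ ∃ T, IsCore S I √(2 * δ * (s + 1 : ℕ)) (S j) T) :
    δ ^ s * I'.card < Fintype.card κ * (1 + δ ^ s) := by
  rcases I'.eq_empty_or_nonempty with rfl | hI'ne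
  · obtain ⟨j, hj⟩ := hI
    have : Nonempty κ := (hne j hj).to_type
    rw [Finset.card_empty, Nat.cast_zero, mul_zero]
    positivity
  by_contra! hmany
  obtain ⟨j, hj, T, hT⟩ := exists_isCore hδ hδ₁ hI'ne (fun j hj => hs j (hI' hj))
    (fun j hj => hne j (hI' hj)) hmany
  exact hcore j hj ⟨T, hT.mono hI'⟩

theorem exists_subset_forall_isCore (hδ : 0 ≤ δ) (hδ₂ : δ ≤ 1 / 2) (hI : I.Nonempty)
    (hs : ∀ j ∈ I, (S j).card ≤ s + 1) (hne : ∀ j ∈ I, (S j).Nonempty)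
    (hcard : (s + 1) * Fintype.card κ ≤ I.card * δ ^ (s + 1)) :
    ∃ J ⊆ I, J.Nonempty ∧ s * Fintype.card κ ≤ J.card * δ ^ s ∧
      ∀ j ∈ J, ∃ T, IsCore S I √(2 * δ * (s + 1 : ℕ)) (S j) T := by
  classical
  set J := I.filter fun j => ∃ T, IsCore S I √(2 * δ * (s + 1 : ℕ)) (S j) T
  have hfew : δ ^ s * (I \ J).card < Fintype.card κ * (1 + δ ^ s) :=
    card_lt_of_forall_not_isCore hδ (by linarith) hI hs hne Finset.sdiff_subset fun j hj hT =>
      (Finset.mem_sdiff.mp hj).2 (Finset.mem_filter.mpr ⟨(Finset.mem_sdiff.mp hj).1, hT⟩)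
  have hsplit : (I \ J).card + J.card = I.card :=
    Finset.card_sdiff_add_card_eq_card (Finset.filter_subset _ I)
  have htwo : 2 * (s + 1) * Fintype.card κ ≤ I.card * δ ^ s := by
    have : I.card * δ ^ (s + 1) ≤ I.card * δ ^ s * (1 / 2) := by
      rw [pow_succ, ← mul_assoc]; gcongr
    linarith
  have hlost : (Fintype.card κ : ℝ) * (1 + δ ^ s) ≤ Fintype.card κ * 2 := by
    gcongr
    linarith [pow_le_one₀ (n := s) hδ (by linarith)]
  have hJcard : 2 * (s * Fintype.card κ) < J.card * δ ^ s := by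
    rw [← hsplit, Nat.cast_add] at htwo
    linarith
  have hsκ : 0 ≤ (s : ℝ) * Fintype.card κ := by positivity
  refine ⟨J, Finset.filter_subset _ I, Finset.card_pos.mp ?_, by linarith,
    fun j hj => (Finset.mem_filter.mp hj).2⟩
  have : 0 < (J.card : ℝ) * δ ^ s := by linarith
  exact_mod_cast pos_of_mul_pos_left this (by positivity)

theorem IsApproxBy.of_forall_isCore [DecidableEq κ] {J : Finset ι} {T : ι → Finset κ} {c ε η : ℝ}
    {i : ι} (hJI : J ⊆ I) (hi : i ∈ J) (hT : ∀ j ∈ J, IsCore S I η (S j) (T j))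
    (h : IsApproxBy (indicatorVec ∘ fun j => S j \ T j) (J.erase i) c ε
      (indicatorVec (S i \ T i))) :
    IsApproxBy (indicatorVec ∘ S) (I.erase i) (2 * c + 1) (ε + (c + 1) * η)
      (indicatorVec (S i)) := by
  have hcore : ∀ j ∈ J, IsApproxBy (indicatorVec ∘ S) (I.erase i) 1 η
      (indicatorVec (S j) - indicatorVec (S j \ T j)) := fun j hj => by
    rw [indicatorVec_sdiff (hT j hj).subset, sub_sub_cancel]
    exact (hT j hj).isApproxBy i
  exact (h.of_residual (Finset.erase_subset_erase i hJI)
    (fun j hj => hcore j (Finset.mem_of_mem_erase hj)) (hcore i hi)).mono_bounds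
    (by linarith) le_rfl

theorem exists_isApproxBy_erase_of_le_half (hδ : 0 ≤ δ) (hδ₂ : δ ≤ 1 / 2) (hI : I.Nonempty)
    (hs : ∀ j ∈ I, (S j).card ≤ s) (hcard : s * Fintype.card κ ≤ I.card * δ ^ s) :
    ∃ i ∈ I, IsApproxBy (indicatorVec ∘ S) (I.erase i) (2 ^ s - 1)
      ((2 ^ s - 1) * √(2 * δ * s)) (indicatorVec (S i)) := by
  classical
  have hpow (m : ℕ) : (0 : ℝ) ≤ 2 ^ m - 1 := sub_nonneg.mpr (one_le_pow₀ one_le_two)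
  induction s generalizing S I with
  | zero =>
    obtain ⟨i, hi⟩ := hI
    refine ⟨i, hi, (IsApproxBy.of_norm_le le_rfl).mono_bounds (by simp) ?_⟩
    simp [norm_indicatorVec, Nat.le_zero.mp (hs i hi)]
  | succ s ih =>
    by_cases! hne : ∃ i ∈ I, S i = ∅
    · obtain ⟨i, hi, hSi⟩ := hne
      refine ⟨i, hi, (IsApproxBy.of_norm_le le_rfl).mono_bounds (hpow _) ?_⟩
      simpa [norm_indicatorVec, hSi] using mul_nonneg (hpow (s + 1)) (Real.sqrt_nonneg _)
    obtain ⟨J, hJI, hJ, hJcard, hcore⟩ :=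
      exists_subset_forall_isCore hδ hδ₂ hI hs hne (mod_cast hcard)
    choose! T hT using hcore
    have hresidual : ∀ j ∈ J, (S j \ T j).card ≤ s := fun j hj =>
      Nat.lt_succ_iff.mp <| (Finset.card_lt_card <|
        Finset.sdiff_ssubset (hT j hj).subset (hT j hj).nonempty).trans_le (hs j (hJI hj))
    obtain ⟨i, hi, happrox⟩ := ih hJ hresidual hJcard
    refine ⟨i, hJI hi, (happrox.of_forall_isCore hJI hi hT).mono_bounds ?_ ?_⟩
    · rw [pow_succ]
      linarith
    · calc (2 ^ s - 1) * √(2 * δ * s) + (2 ^ s - 1 + 1) * √(2 * δ * (s + 1 : ℕ))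
          ≤ (2 ^ s - 1) * √(2 * δ * (s + 1 : ℕ))
            + (2 ^ s - 1 + 1) * √(2 * δ * (s + 1 : ℕ)) := by
            have := hpow s
            gcongr
            exact s.le_succ
        _ = (2 ^ (s + 1) - 1) * √(2 * δ * (s + 1 : ℕ)) := by ring

theorem exists_isApproxBy_erase (hδ : 0 ≤ δ) (hI : I.Nonempty)
    (hs : ∀ j ∈ I, (S j).card ≤ s) (hcard : s * Fintype.card κ ≤ I.card * δ ^ s) :
    ∃ i ∈ I, IsApproxBy (indicatorVec ∘ S) (I.erase i) (2 ^ s - 1)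
      ((2 ^ s - 1) * √(2 * δ * s)) (indicatorVec (S i)) := by
  rcases le_total δ (1 / 2) with hδ₂ | hδ₂
  · exact exists_isApproxBy_erase_of_le_half hδ hδ₂ hI hs hcard
  obtain ⟨i, hi⟩ := hI
  have hpow : (1 : ℝ) ≤ 2 ^ s := one_le_pow₀ one_le_two
  refine ⟨i, hi, (IsApproxBy.of_norm_le ?_).mono_bounds (sub_nonneg.mpr hpow) le_rfl⟩
  have hnorm : ‖indicatorVec (S i)‖ ≤ √s := by
    rw [norm_indicatorVec]
    gcongr
    exact hs i hi
  rcases s.eq_zero_or_pos with rfl | hs₀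
  · simpa using hnorm
  have htwo : (2 : ℝ) ≤ 2 ^ s := le_self_pow₀ one_le_two hs₀.ne'
  calc ‖indicatorVec (S i)‖ ≤ √s := hnorm
    _ ≤ √(2 * δ * s) := by
        gcongr
        exact le_mul_of_one_le_left s.cast_nonneg (by linarith)
    _ ≤ (2 ^ s - 1) * √(2 * δ * s) := le_mul_of_one_le_left (Real.sqrt_nonneg _) (by linarith)

end Cores

section Coordinates

variable {n N t : ℕ}

theorem l2norm_eq_norm_toLp (u : Fin n → ℝ) :
    l2norm u = ‖(WithLp.toLp 2 u : EuclideanSpace ℝ (Fin n))‖ := by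
  simp [EuclideanSpace.norm_eq, l2norm]

theorem indicatorVec_support_of_binary {u : Fin n → ℝ} (hu : ∀ b, u b = 0 ∨ u b = 1) :
    indicatorVec (Finset.univ.filter (u · ≠ 0)) = WithLp.toLp 2 u := by
  ext b
  rcases hu b with h | h <;> simp [indicatorVec_apply, h]

theorem SparseVec.card_support_le {u : Fin n → ℝ} (hu : SparseVec t u) :
    (Finset.univ.filter (u · ≠ 0)).card ≤ t := by
  simpa [SparseVec, Set.ncard_eq_toFinset_card'] using hu

theorem IsApproxBy.exists_l1norm_le {v : Fin N → Fin n → ℝ} {i : Fin N} {c ε : ℝ}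
    (h : IsApproxBy (fun j => (WithLp.toLp 2 (v j) : EuclideanSpace ℝ (Fin n)))
      (Finset.univ.erase i) c ε (WithLp.toLp 2 (v i))) :
    ∃ x : Fin N → ℝ, l1norm x ≤ c ∧
      l2norm (v i - ∑ j ∈ Finset.univ.erase i, x j • v j) ≤ ε := by
  obtain ⟨x, hx, hv⟩ := h
  have hupdate : ∀ j ∈ Finset.univ.erase i, Function.update x i 0 j = x j := fun j hj =>
    Function.update_of_ne (Finset.ne_of_mem_erase hj) 0 x
  refine ⟨Function.update x i 0, ?_, ?_⟩
  · rw [l1norm, ← Finset.add_sum_erase _ _ (Finset.mem_univ i), Function.update_self, abs_zero,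
      zero_add, Finset.sum_congr rfl fun j hj => by rw [hupdate j hj]]
    exact hx
  · rw [Finset.sum_congr rfl fun j hj => by rw [hupdate j hj], l2norm_eq_norm_toLp]
    simpa [WithLp.toLp_sum] using hv

end Coordinates

/-- among enough sparse binary vectors, one is efficiently approximated
by the others. -/
theorem stmt12 (n N t : ℕ) (ht : 1 ≤ t) (hN : 1 ≤ N)
    (v : Fin N → Fin n → ℝ) (hbin : ∀ i j, v i j = 0 ∨ v i j = 1)
    (hsp : ∀ i, SparseVec t (v i)) :
    ∃ (i : Fin N) (x : Fin N → ℝ), l1norm x ≤ 3 ^ t ∧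
      l2norm (v i - ∑ j ∈ Finset.univ.erase i, x j • v j) ≤
        4 ^ t * Real.sqrt (9 * t * (((t : ℝ) * n / N) ^ ((1 : ℝ) / t))) := by
  set δ : ℝ := ((t : ℝ) * n / N) ^ ((1 : ℝ) / t)
  have hδ : 0 ≤ δ := by positivity
  have hδt : t * n = N * δ ^ t := by
    rw [← Real.rpow_natCast, ← Real.rpow_mul (by positivity), one_div_mul_cancel (by positivity),
      Real.rpow_one, mul_div_cancel₀ _ (by positivity)]
  have : Nonempty (Fin N) := ⟨⟨0, hN⟩⟩
  obtain ⟨i, -, happrox⟩ := exists_isApproxBy_erase hδ Finset.univ_nonempty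
    (fun j _ => (hsp j).card_support_le) (by simpa using hδt.le)
  simp only [Function.comp_def, indicatorVec_support_of_binary (hbin _)] at happrox
  obtain ⟨x, hx, hv⟩ := happrox.exists_l1norm_le
  refine ⟨i, x, hx.trans ?_, hv.trans ?_⟩
  · calc (2 : ℝ) ^ t - 1 ≤ 2 ^ t := by linarith
      _ ≤ 3 ^ t := by gcongr; norm_num
  · calc (2 ^ t - 1) * √(2 * δ * t) ≤ 2 ^ t * √(2 * δ * t) := by gcongr; linarith
      _ ≤ 4 ^ t * √(9 * t * δ) := by
          rw [mul_right_comm 9]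
          gcongr <;> norm_num
end
end

section
/- Let n, N, t ∈ ℕ with t ≥ 1 and N ≥ 1, and let v₁,…,v_N ∈ ℝⁿ be t-sparse vectors. Then there exist some i ∈ [N] and x ∈ ℝ^N such that ‖x‖₁ ≤ 3ᵗ and ‖vᵢ − Σ_{j≠i} xⱼvⱼ‖₂ ≤ 4^{t+2}·√t·(n/N)^{1/(4t)}·max_{j∈[N]} ‖vⱼ‖_∞. -/
open Matrix MeasureTheory ProbabilityTheory
open scoped BigOperators ENNReal

noncomputable section

/-!
If no `v i` is close to an `ℓ¹`-bounded combination of the others, separating it from the convex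
set of these combinations gives a unit vector `u i` whose pairing with `v i` exceeds `2 ^ t` times
its pairings with the other `v j` by a fixed error. Keeping only the large entries of `u i` changes
the pairings by less than this error, and for many `i` at once a random colouring of the coordinates
is injective on the support of `v i`, with values in a set `K` of `t` colours, and sends the rest of
the support of `u i` outside `K`.

Every `v i` now has at most one position, its label, in each colour of `K`. If the labels in a set
`A` of colours determine each other, at most `#A` vectors per label span the class of that label in
`A` with factor `2 ^ #A - 1`. An index that agrees with these spanners on `A` only is still
separated after dropping `A`, with the factor `2 ^ #K` replaced by `2 ^ #(K \ A)`. The other indices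
split into a few families on which the label in `A` determines the label in a further colour. This
can be repeated only `2 * t` times before no colour is left, which bounds the number of vectors.
-/

open Finset

section Spanner

variable {ι α β : Type*}

lemma sum_insert_eq_sum_sub_add_pivot [DecidableEq α] {W : Finset α} {a : α} (ha : a ∉ W)
    (u y p : α → ℝ) (hpa : p a ≠ 0) :
    ∑ k ∈ insert a W, u k * y k =
      ∑ k ∈ W, u k * (y k - y a / p a * p k) + y a / p a * ∑ k ∈ insert a W, u k * p k := by
  have hpivot : y a / p a * (u a * p a) = u a * y a := by field_simp
  rw [sum_insert ha, sum_insert ha, mul_add, hpivot, mul_sum, add_left_comm, ← sum_add_distrib]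
  congr 1
  exact sum_congr rfl fun k _ => by ring

lemma exists_spanner (W : Finset α) (I : Finset ι) (v : ι → α → ℝ) :
    ∃ P ⊆ I, #P ≤ #W ∧ ∀ (u : α → ℝ) (c : ℝ), 0 ≤ c →
      (∀ p ∈ P, |∑ a ∈ W, u a * v p a| ≤ c) →
        ∀ i ∈ I, |∑ a ∈ W, u a * v i a| ≤ (2 ^ #W - 1) * c := by
  classical
  induction W using Finset.induction_on generalizing v with
  | empty => exact ⟨∅, by simp, by simp, by simp⟩
  | insert a W ha ih =>
    rw [card_insert_of_notMem ha]
    by_cases hzero : ∀ i ∈ I, v i a = 0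
    · obtain ⟨P, hPI, hPW, hP⟩ := ih v
      have hsum (u : α → ℝ) {i : ι} (hi : i ∈ I) :
          ∑ k ∈ insert a W, u k * v i k = ∑ k ∈ W, u k * v i k := by
        rw [sum_insert ha, hzero i hi, mul_zero, zero_add]
      refine ⟨P, hPI, by omega, fun u c hc hp i hi => ?_⟩
      rw [hsum u hi]
      refine (hP u c hc (fun p hpP => hsum u (hPI hpP) ▸ hp p hpP) i hi).trans ?_
      gcongr <;> norm_num
    · push Not at hzero
      obtain ⟨i₀, hi₀, hi₀a⟩ := hzero
      obtain ⟨p, hpI, hpmax⟩ := exists_max_image I (fun i => |v i a|) ⟨i₀, hi₀⟩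
      have hpa : v p a ≠ 0 := abs_pos.mp ((abs_pos.mpr hi₀a).trans_le (hpmax i₀ hi₀))
      obtain ⟨P, hPI, hPW, hP⟩ := ih fun i k => v i k - v i a / v p a * v p k
      refine ⟨insert p P, insert_subset hpI hPI, (card_insert_le _ _).trans (by omega),
        fun u c hc hp i hi => ?_⟩
      have hshift : ∀ j ∈ I, |v j a / v p a * ∑ k ∈ insert a W, u k * v p k| ≤ c := fun j hj => by
        rw [abs_mul, abs_div, ← one_mul c]
        have hratio : |v j a| / |v p a| ≤ 1 := (div_le_one (abs_pos.mpr hpa)).mpr (hpmax j hj)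
        exact mul_le_mul hratio (hp p (mem_insert_self _ _)) (abs_nonneg _) zero_le_one
      have hreduced : ∀ q ∈ P, |∑ k ∈ W, u k * (v q k - v q a / v p a * v p k)| ≤ 2 * c :=
        fun q hq => by
          rw [eq_sub_of_add_eq (sum_insert_eq_sum_sub_add_pivot ha u (v q) (v p) hpa).symm]
          linarith [abs_sub (∑ k ∈ insert a W, u k * v q k)
            (v q a / v p a * ∑ k ∈ insert a W, u k * v p k),
            hp q (mem_insert_of_mem hq), hshift q (hPI hq)]
      rw [sum_insert_eq_sum_sub_add_pivot ha u (v i) (v p) hpa]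
      calc _ ≤ (2 ^ #W - 1) * (2 * c) + c :=
            (abs_add_le _ _).trans
              (add_le_add (hP u (2 * c) (by positivity) hreduced i hi) (hshift i hi))
        _ = (2 ^ (#W + 1) - 1) * c := by ring

lemma exists_subset_card_le_mul_of_mapsTo {F : Finset ι} {V : Finset β} {k : ℕ}
    (g : ι → β) (hV : #V ≤ k) (hg : ∀ i ∈ F, g i ∈ V) :
    ∃ E ⊆ F, #F ≤ k * #E ∧ ∀ i ∈ E, ∀ j ∈ E, g i = g j := by
  classical
  obtain rfl | ⟨i₀, hi₀⟩ := F.eq_empty_or_nonempty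
  · exact ⟨∅, by simp⟩
  obtain ⟨z, -, hz⟩ := exists_max_image V (fun z => #{i ∈ F | g i = z}) ⟨g i₀, hg i₀ hi₀⟩
  refine ⟨{i ∈ F | g i = z}, filter_subset _ _, ?_, fun i hi j hj => ?_⟩
  · calc #F = ∑ y ∈ V, #{i ∈ F | g i = y} := card_eq_sum_card_fiberwise hg
      _ ≤ #V * #{i ∈ F | g i = z} := sum_le_card_nsmul _ _ _ hz
      _ ≤ k * #{i ∈ F | g i = z} := Nat.mul_le_mul_right _ hV
  · rw [(mem_filter.mp hi).2, (mem_filter.mp hj).2]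

lemma exists_subset_card_le_mul_of_fiberwise {I : Finset ι} {k : ℕ} (f : ι → α) (g : ι → β)
    (V : α → Finset β) (hV : ∀ y, #(V y) ≤ k)
    (hg : ∀ i ∈ I, g i ∈ V (f i)) :
    ∃ J ⊆ I, #I ≤ k * #J ∧ ∀ i ∈ J, ∀ j ∈ J, f i = f j → g i = g j := by
  classical
  choose E hEF hcard hE using fun y =>
    exists_subset_card_le_mul_of_mapsTo (F := {i ∈ I | f i = y}) g (hV y) fun i hi => by
      obtain ⟨hiI, rfl⟩ := mem_filter.mp hi
      exact hg i hiI
  have hmem {y : α} {i : ι} (hi : i ∈ E y) : i ∈ I ∧ f i = y := mem_filter.mp (hEF y hi)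
  refine ⟨{i ∈ I | i ∈ E (f i)}, filter_subset _ _, ?_, fun i hi j hj hij => ?_⟩
  · have hfiber (y : α) : E y ⊆ {i ∈ {i ∈ I | i ∈ E (f i)} | f i = y} := fun i hi => by
      obtain ⟨hiI, rfl⟩ := hmem hi
      simp [hiI, hi]
    calc #I = ∑ y ∈ I.image f, #{i ∈ I | f i = y} := card_eq_sum_card_image f I
      _ ≤ ∑ y ∈ I.image f, k * #{i ∈ {i ∈ I | i ∈ E (f i)} | f i = y} :=
        sum_le_sum fun y _ => (hcard y).trans (Nat.mul_le_mul_left k (card_le_card (hfiber y)))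
      _ = k * #{i ∈ I | i ∈ E (f i)} := by
        rw [← mul_sum, ← card_eq_sum_card_fiberwise fun i hi =>
          mem_image_of_mem f (mem_filter.mp hi).1]
  · exact hE (f i) i (mem_filter.mp hi).2 j (hij ▸ (mem_filter.mp hj).2)

end Spanner

section Towers

variable {ι κ α : Type*}

/-- On `I`, the label in colour `c` determines the label in colour `d`; here `x i c` is the label of
`i` in colour `c`. -/
def Determines (x : ι → κ → α) (I : Finset ι) (c d : κ) : Prop :=
  ∀ i ∈ I, ∀ j ∈ I, x i c = x j c → x i d = x j d

/-- A tower of colours: the set `T` is sorted by `ℓ` into levels `0, …, r - 1`, some of them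
possibly empty, and on `I` each colour determines all colours of the same or a higher level. It
records the dependencies between colours found so far while indices are being discarded. -/
structure IsTower (x : ι → κ → α) (I : Finset ι) (T : Finset κ) (ℓ : κ → ℕ) (r : ℕ) : Prop where
  level_lt : ∀ c ∈ T, ℓ c < r
  determines : ∀ c ∈ T, ∀ d ∈ T, ℓ c ≤ ℓ d → Determines x I c d

variable {x : ι → κ → α} {I J : Finset ι} {T : Finset κ} {ℓ : κ → ℕ} {r : ℕ} {c d e : κ}

lemma Determines.trans (hcd : Determines x I c d) (hde : Determines x I d e) :
    Determines x I c e :=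
  fun i hi j hj h => hde i hi j hj (hcd i hi j hj h)

lemma Determines.mono (h : Determines x I c d) (hJ : J ⊆ I) : Determines x J c d :=
  fun i hi j hj => h i (hJ hi) j (hJ hj)

lemma isTower_singleton (x : ι → κ → α) (I : Finset ι) (d : κ) : IsTower x I {d} 0 1 where
  level_lt _ _ := Nat.one_pos
  determines c hc e he _ := by
    rw [mem_singleton.mp hc, mem_singleton.mp he]
    exact fun _ _ _ _ h => h

namespace IsTower

lemma mono (h : IsTower x I T ℓ r) (hJ : J ⊆ I) : IsTower x J T ℓ r where
  level_lt := h.level_lt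
  determines c hc d hd hcd := (h.determines c hc d hd hcd).mono hJ

lemma eq_empty (h : IsTower x I T ℓ 0) : T = ∅ :=
  eq_empty_of_forall_notMem fun c hc => Nat.not_lt_zero _ (h.level_lt c hc)

lemma pop [DecidableEq κ] (h : IsTower x I T ℓ (r + 1)) :
    IsTower x I (T \ {c ∈ T | ℓ c = r}) ℓ r where
  level_lt c hc := by
    simp only [mem_sdiff, mem_filter, not_and] at hc
    have := h.level_lt c hc.1
    have := hc.2 hc.1
    omega
  determines c hc d hd := h.determines c (mem_sdiff.mp hc).1 d (mem_sdiff.mp hd).1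

lemma push [DecidableEq κ] (h : IsTower x I T ℓ (r + 1)) (hc : c ∈ T) (hcr : ℓ c = r) (hd : d ∉ T)
    (hcd : Determines x I c d) :
    IsTower x I (insert d T) (Function.update ℓ d (r + 1)) (r + 2) := by
  have hℓ : ∀ e ∈ T, Function.update ℓ d (r + 1) e = ℓ e := fun e he =>
    Function.update_of_ne (ne_of_mem_of_not_mem he hd) _ _
  refine ⟨fun e he => ?_, fun e he f hf hef => ?_⟩
  · obtain rfl | he := mem_insert.mp he
    · simp
    · rw [hℓ e he]
      exact (h.level_lt e he).trans (by omega)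
  · obtain rfl | heT := mem_insert.mp he <;> obtain rfl | hfT := mem_insert.mp hf
    · exact fun _ _ _ _ h => h
    · rw [Function.update_self, hℓ f hfT] at hef
      have := h.level_lt f hfT
      omega
    · exact (h.determines e heT c hc (by have := h.level_lt e heT; omega)).trans hcd
    · rw [hℓ e heT, hℓ f hfT] at hef
      exact h.determines e heT f hfT hef

lemma merge (h : IsTower x I T ℓ (r + 1)) (hc : c ∈ T) (hcr : ℓ c = r) (hd : d ∈ T)
    (hcd : Determines x I c d) : IsTower x I T (fun e => min (ℓ e) (ℓ d)) (ℓ d + 1) where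
  level_lt e _ := Nat.lt_succ_of_le (min_le_right _ _)
  determines e he f hf hef := by
    obtain hle | hlt := le_or_gt (ℓ e) (ℓ f)
    · exact h.determines e he f hf hle
    · have hec : ℓ e ≤ ℓ c := by have := h.level_lt e he; omega
      have hdf : ℓ d ≤ ℓ f := by omega
      exact ((h.determines e he c hc hec).trans hcd).trans (h.determines d hd f hf hdf)

end IsTower

end Towers

section Separation

variable {ι κ α : Type*} [DecidableEq α] {x : ι → κ → α} {u w : ι → κ → ℝ} {A K : Finset κ}
  {I J : Finset ι} {b : ι → ℝ} {i j : ι} {c : κ}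

/-- The pairing of the coefficients `u i` with `w j` over the colours in `K` where the labels of `i`
and `j` agree. For vectors with one entry `w j c`, at position `x j c`, in every colour `c`, this is
their inner product. -/
def agreementPairing (x : ι → κ → α) (u w : ι → κ → ℝ) (K : Finset κ) (i j : ι) : ℝ :=
  ∑ c ∈ K with x i c = x j c, u i c * w j c

/-- On `I`, each `u i` pairs with `w i` to more than `2 ^ #K - 1` times the bound `b i` on its
pairings with the other `w j`. The factor is the one that survives removing a set `A` of colours at
the price of replacing `b` by `2 ^ #A * b`. -/
structure IsSeparated (x : ι → κ → α) (u w : ι → κ → ℝ) (K : Finset κ) (I : Finset ι)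
    (b : ι → ℝ) : Prop where
  nonneg : ∀ i ∈ I, 0 ≤ b i
  abs_le : ∀ i ∈ I, ∀ j ∈ I, j ≠ i → |agreementPairing x u w K i j| ≤ b i
  lt_self : ∀ i ∈ I, (2 ^ #K - 1) * b i < agreementPairing x u w K i i

lemma agreementPairing_of_forall_eq (h : ∀ c ∈ K, x i c = x j c) :
    agreementPairing x u w K i j = ∑ c ∈ K, u i c * w j c := by
  rw [agreementPairing, filter_true_of_mem h]

lemma agreementPairing_of_forall_ne (h : ∀ c ∈ K, x i c ≠ x j c) :
    agreementPairing x u w K i j = 0 := by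
  rw [agreementPairing, filter_false_of_mem h, sum_empty]

lemma agreementPairing_sdiff_add [DecidableEq κ] (hAK : A ⊆ K) (i j : ι) :
    agreementPairing x u w (K \ A) i j + agreementPairing x u w A i j =
      agreementPairing x u w K i j := by
  simp only [agreementPairing, sum_filter]
  exact sum_sdiff hAK

namespace IsSeparated

lemma mono (h : IsSeparated x u w K I b) (hJ : J ⊆ I) : IsSeparated x u w K J b where
  nonneg i hi := h.nonneg i (hJ hi)
  abs_le i hi j hj := h.abs_le i (hJ hi) j (hJ hj)
  lt_self i hi := h.lt_self i (hJ hi)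

lemma eq_empty (h : IsSeparated x u w ∅ I b) : I = ∅ :=
  eq_empty_of_forall_notMem fun i hi => by simpa [agreementPairing] using h.lt_self i hi

lemma sdiff [DecidableEq κ] (h : IsSeparated x u w K I b) (hAK : A ⊆ K)
    (hA : ∀ i ∈ I, ∀ j ∈ I, |agreementPairing x u w A i j| ≤ (2 ^ #A - 1) * b i) :
    IsSeparated x u w (K \ A) I (fun i => 2 ^ #A * b i) where
  nonneg i hi := mul_nonneg (by positivity) (h.nonneg i hi)
  abs_le i hi j hj hji := by
    rw [eq_sub_of_add_eq (agreementPairing_sdiff_add hAK i j)]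
    linarith [abs_sub (agreementPairing x u w K i j) (agreementPairing x u w A i j),
      h.abs_le i hi j hj hji, hA i hi j hj]
  lt_self i hi := by
    have hpow : (2 : ℝ) ^ #(K \ A) * 2 ^ #A = 2 ^ #K := by
      rw [← pow_add, card_sdiff_add_card_eq_card hAK]
    calc (2 ^ #(K \ A) - 1) * (2 ^ #A * b i)
        = (2 ^ #K - 1) * b i - (2 ^ #A - 1) * b i := by rw [← hpow]; ring
      _ < agreementPairing x u w K i i - agreementPairing x u w A i i :=
        by linarith [h.lt_self i hi, (le_abs_self _).trans (hA i hi i hi)]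
      _ = agreementPairing x u w (K \ A) i i :=
        (eq_sub_of_add_eq (agreementPairing_sdiff_add hAK i i)).symm

/-- If `i` agrees with the members of a spanner of its own class only on `A`, then its pairings with
them are already controlled, and the spanner property extends the control to the whole class. -/
lemma abs_agreementPairing_le_of_spanner [DecidableEq κ] (h : IsSeparated x u w K I b)
    (hAK : A ⊆ K) (hcA : ∀ d ∈ A, Determines x I c d ∧ Determines x I d c) {P : Finset ι}
    (hP : P ⊆ {k ∈ I | x k c = x i c})
    (hspan : ∀ (y : κ → ℝ) (s : ℝ), 0 ≤ s → (∀ p ∈ P, |∑ d ∈ A, y d * w p d| ≤ s) →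
      ∀ k ∈ ({k ∈ I | x k c = x i c} : Finset ι), |∑ d ∈ A, y d * w k d| ≤ (2 ^ #A - 1) * s)
    (hi : i ∈ I) (hiP : i ∉ P) (hisolated : ∀ d ∈ K \ A, ∀ p ∈ P, x p d ≠ x i d) (hj : j ∈ I) :
    |agreementPairing x u w A i j| ≤ (2 ^ #A - 1) * b i := by
  by_cases hij : x i c = x j c
  · rw [agreementPairing_of_forall_eq fun d hd => (hcA d hd).1 i hi j hj hij]
    refine hspan (u i) (b i) (h.nonneg i hi) (fun p hp => ?_) j (mem_filter.mpr ⟨hj, hij.symm⟩)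
    obtain ⟨hpI, hpc⟩ := mem_filter.mp (hP hp)
    have hpair : agreementPairing x u w K i p = ∑ d ∈ A, u i d * w p d := by
      rw [← agreementPairing_sdiff_add hAK,
        agreementPairing_of_forall_ne fun d hd => (hisolated d hd p hp).symm, zero_add,
        agreementPairing_of_forall_eq fun d hd => (hcA d hd).1 i hi p hpI hpc.symm]
    rw [← hpair]
    exact h.abs_le i hi p hpI (ne_of_mem_of_not_mem hp hiP)
  · rw [agreementPairing_of_forall_ne fun d hd h' => hij ((hcA d hd).2 i hi j hj h'), abs_zero]
    exact mul_nonneg (sub_nonneg.mpr (one_le_pow₀ one_le_two)) (h.nonneg i hi)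

variable [Fintype α]

/-- Bounds `#I` by splitting `I` into spanners of the classes of `c`, the indices meeting them only
in `A`, for which `A` can be dropped, and, for each further colour `d`, the indices meeting them in
`d`, most of which have their label in `d` determined by the label in `c`. -/
lemma card_le_of_class [DecidableEq κ] (h : IsSeparated x u w K I b) (hAK : A ⊆ K)
    (hcA : ∀ d ∈ A, Determines x I c d ∧ Determines x I d c) {m : ℕ}
    (hdrop : ∀ J ⊆ I, IsSeparated x u w (K \ A) J (fun i => 2 ^ #A * b i) → #J ≤ m)
    (hgrow : ∀ d ∈ K \ A, ∀ J ⊆ I, Determines x J c d → #J ≤ m) :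
    #I ≤ #A * Fintype.card α + m + #(K \ A) * (#A * m) := by
  classical
  choose P hP hPcard hspan using fun y => exists_spanner A {i ∈ I | x i c = y} w
  set spanning := univ.biUnion P
  set isolated := {i ∈ I | i ∉ spanning ∧ ∀ d ∈ K \ A, ∀ p ∈ P (x i c), x p d ≠ x i d}
  set meeting := fun d => {i ∈ I | x i d ∈ (P (x i c)).image (x · d)}
  have hcover : I ⊆ spanning ∪ isolated ∪ (K \ A).biUnion meeting := fun i hi => by
    by_contra hne
    simp only [mem_union, not_or, mem_biUnion, not_exists, not_and] at hne
    refine hne.1.2 (mem_filter.mpr ⟨hi, hne.1.1, fun d hd p hp hpd => ?_⟩)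
    exact hne.2 d hd (mem_filter.mpr ⟨hi, mem_image.mpr ⟨p, hp, hpd⟩⟩)
  have hspanning : #spanning ≤ #A * Fintype.card α := by
    rw [mul_comm]
    exact card_biUnion_le_card_mul _ _ _ fun y _ => hPcard y
  have hisolated : #isolated ≤ m := by
    have hsub : isolated ⊆ I := filter_subset _ _
    refine hdrop _ hsub ((h.mono hsub).sdiff hAK fun i hi j hj => ?_)
    obtain ⟨hiI, hiP, hid⟩ := mem_filter.mp hi
    exact h.abs_agreementPairing_le_of_spanner hAK hcA (hP _) (hspan _) hiI
      (fun hmem => hiP (mem_biUnion.mpr ⟨_, mem_univ _, hmem⟩)) hid (hsub hj)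
  have hmeeting : ∀ d ∈ K \ A, #(meeting d) ≤ #A * m := fun d hd => by
    obtain ⟨J, hJ, hcard, hdet⟩ := exists_subset_card_le_mul_of_fiberwise (I := meeting d)
      (x · c) (x · d) (fun y => (P y).image (x · d)) (fun y => card_image_le.trans (hPcard y))
      fun i hi => (mem_filter.mp hi).2
    exact hcard.trans (Nat.mul_le_mul_left _ (hgrow d hd J (hJ.trans (filter_subset _ _)) hdet))
  calc #I ≤ #spanning + #isolated + #((K \ A).biUnion meeting) :=
        (card_le_card hcover).trans ((card_union_le _ _).trans (by gcongr; exact card_union_le _ _))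
    _ ≤ _ := by gcongr; exact card_biUnion_le_card_mul _ _ _ hmeeting

/-- The induction step along the potential `2 * #(K \ T) + r`. The top level of the tower is a class
of colours: either it is dropped, or its label determines the label in another colour, which becomes
a new top level if it is outside `T`, and collapses the levels from its own upwards otherwise. -/
lemma card_le_of_isTower_step [DecidableEq κ] (h : IsSeparated x u w K I b) {T : Finset κ}
    {ℓ : κ → ℕ} {r m : ℕ}
    (hT : IsTower x I T ℓ (r + 1)) (hTK : T ⊆ K) (hc : c ∈ T) (hcr : ℓ c = r)
    (ih : ∀ {K' T' : Finset κ} {J : Finset ι} {b' : ι → ℝ} {ℓ' : κ → ℕ} {r' : ℕ},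
      IsSeparated x u w K' J b' → IsTower x J T' ℓ' r' → T' ⊆ K' → #K' ≤ #K →
        2 * #(K' \ T') + r' ≤ 2 * #(K \ T) + r → #J ≤ m) :
    #I ≤ #K * Fintype.card α + m + #K * (#K * m) := by
  set A := {d ∈ T | ℓ d = r}
  have hAK : A ⊆ K := (filter_subset _ _).trans hTK
  have hle : ∀ d ∈ T, ℓ d ≤ ℓ c := fun d hd => by have := hT.level_lt d hd; omega
  have hcA : ∀ d ∈ A, Determines x I c d ∧ Determines x I d c := fun d hd => by
    obtain ⟨hdT, hdr⟩ := mem_filter.mp hd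
    exact ⟨hT.determines c hc d hdT (by omega), hT.determines d hdT c hc (hle d hdT)⟩
  refine (h.card_le_of_class hAK hcA (m := m) (fun J hJ hsep => ?_)
    fun d hd J hJ hcd => ?_).trans ?_
  · have hcard : #((K \ A) \ (T \ A)) ≤ #(K \ T) := card_le_card (by grind)
    have hpop : IsTower x I (T \ A) ℓ r := hT.pop
    exact ih hsep (hpop.mono hJ) (sdiff_subset_sdiff hTK subset_rfl)
      (card_le_card sdiff_subset) (by omega)
  · obtain ⟨hdK, hdA⟩ := mem_sdiff.mp hd
    by_cases hdT : d ∈ T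
    · have hdr : ℓ d ≠ r := fun h' => hdA (mem_filter.mpr ⟨hdT, h'⟩)
      have := hle d hdT
      exact ih (h.mono hJ) ((hT.mono hJ).merge hc hcr hdT hcd) hTK le_rfl (by omega)
    · have hcard : #(K \ insert d T) + 1 = #(K \ T) := by
        rw [sdiff_insert]
        exact card_erase_add_one (mem_sdiff.mpr ⟨hdK, hdT⟩)
      exact ih (h.mono hJ) ((hT.mono hJ).push hc hcr hdT hcd) (insert_subset hdK hTK) le_rfl
        (by omega)
  · gcongr
    exact sdiff_subset

lemma card_le_of_isTower [DecidableEq κ] {t m r : ℕ} {T : Finset κ} {ℓ : κ → ℕ}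
    (h : IsSeparated x u w K I b) (hT : IsTower x I T ℓ r) (hTK : T ⊆ K) (hKt : #K ≤ t)
    (hm : 2 * #(K \ T) + r ≤ m) :
    #I ≤ ((t + 1) ^ 2) ^ m * Fintype.card α := by
  induction m generalizing K I b T ℓ r with
  | zero =>
    obtain ⟨hKT, rfl⟩ : #(K \ T) = 0 ∧ r = 0 := by omega
    rw [hT.eq_empty, sdiff_empty, card_eq_zero] at hKT
    simp [(hKT ▸ h).eq_empty]
  | succ m ih =>
    have hmono : ((t + 1) ^ 2) ^ m ≤ ((t + 1) ^ 2) ^ (m + 1) :=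
      Nat.pow_le_pow_right (by positivity) m.le_succ
    cases r with
    | zero =>
      obtain rfl | ⟨d, hd⟩ := K.eq_empty_or_nonempty
      · simp [h.eq_empty]
      · have hcard : #(K \ {d}) + 1 = #K := by
          rw [sdiff_singleton_eq_erase, card_erase_add_one hd]
        rw [hT.eq_empty, sdiff_empty] at hm
        exact (ih h (isTower_singleton x I d) (singleton_subset_iff.mpr hd) hKt (by omega)).trans
          (Nat.mul_le_mul_right _ hmono)
    | succ r =>
      obtain htop | ⟨c, hc⟩ := {c ∈ T | ℓ c = r}.eq_empty_or_nonempty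
      · have hpop := hT.pop
        rw [htop, sdiff_empty] at hpop
        exact (ih h hpop hTK hKt (by omega)).trans (Nat.mul_le_mul_right _ hmono)
      · obtain ⟨hcT, hcr⟩ := mem_filter.mp hc
        refine (h.card_le_of_isTower_step hT hTK hcT hcr fun h' hT' hTK' hK' hm' =>
          ih h' hT' hTK' (hK'.trans hKt) (by omega)).trans ?_
        have hone : 1 ≤ ((t + 1) ^ 2) ^ m := Nat.one_le_pow _ _ (by positivity)
        calc _ ≤ t * (((t + 1) ^ 2) ^ m * Fintype.card α) + ((t + 1) ^ 2) ^ m * Fintype.card α +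
              t * (t * (((t + 1) ^ 2) ^ m * Fintype.card α)) := by
              gcongr
              exact Nat.le_mul_of_pos_left _ hone
          _ ≤ (t + 1) ^ 2 * (((t + 1) ^ 2) ^ m * Fintype.card α) := by
              linarith [Nat.zero_le (t * (((t + 1) ^ 2) ^ m * Fintype.card α))]
          _ = ((t + 1) ^ 2) ^ (m + 1) * Fintype.card α := by ring

lemma card_le {t : ℕ} (h : IsSeparated x u w K I b) (hKt : #K ≤ t) :
    #I ≤ (t + 1) ^ (4 * t) * Fintype.card α := by
  classical
  have hempty : IsTower x I (∅ : Finset κ) 0 0 := ⟨by simp, by simp⟩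
  have := h.card_le_of_isTower hempty (empty_subset _) hKt (m := 2 * t) (by simpa using hKt)
  rwa [← pow_mul, ← mul_assoc] at this

end IsSeparated

end Separation

section Coloring

variable {ι X κ : Type*} [Fintype κ] [Nonempty κ]

lemma pow_le_two_mul_sub_pow {q g z : ℕ} (hq : 0 < q) (hg : g ≤ q) (h : 2 * z * g ≤ q) :
    q ^ z ≤ 2 * (q - g) ^ z := by
  have hq' : (0 : ℝ) < q := Nat.cast_pos.mpr hq
  have hgq : (g : ℝ) / q ≤ 1 := (div_le_one hq').mpr (Nat.cast_le.mpr hg)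
  have hhalf : (z : ℝ) * (g / q) ≤ 1 / 2 := by
    rw [← mul_div_assoc, div_le_div_iff₀ hq' two_pos]
    exact_mod_cast (by linarith : z * g * 2 ≤ 1 * q)
  have hbernoulli := one_add_mul_le_pow (a := -((g : ℝ) / q)) (by linarith) z
  have hsub : (q : ℝ) - g = q * (1 + -(g / q)) := by field_simp; ring
  rify [hg]
  rw [hsub, mul_pow]
  nlinarith [pow_pos hq' z]

lemma card_pow_le_mul_card_extensions [Fintype X] [DecidableEq X] [DecidableEq κ] {A Z : Finset X}
    {G : Finset κ} (g : X → κ) (hAZ : Disjoint A Z) (hG : 2 * #Z * #G ≤ Fintype.card κ) :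
    Fintype.card κ ^ Fintype.card X ≤ 2 * Fintype.card κ ^ #A *
      #{h : X → κ | (∀ a ∈ A, h a = g a) ∧ ∀ z ∈ Z, h z ∉ G} := by
  set q := Fintype.card κ
  set F : X → Finset κ := fun a => if a ∈ A then {g a} else if a ∈ Z then Gᶜ else univ
  have hF : ({h : X → κ | (∀ a ∈ A, h a = g a) ∧ ∀ z ∈ Z, h z ∉ G} : Finset (X → κ)) =
      Fintype.piFinset F := by
    ext h
    simp only [mem_filter, mem_univ, true_and, Fintype.mem_piFinset, F]
    refine ⟨fun ⟨hA, hZ⟩ a => ?_, fun hh => ⟨fun a ha => ?_, fun z hz => ?_⟩⟩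
    · split_ifs with ha hz
      · exact mem_singleton.mpr (hA a ha)
      · exact mem_compl.mpr (hZ a hz)
      · exact mem_univ _
    · simpa [ha] using hh a
    · simpa [hz, disjoint_right.mp hAZ hz] using hh z
  have hfactor : q ^ Fintype.card X * (q - #G) ^ #Z = q ^ #A * q ^ #Z * ∏ a, #(F a) := by
    have hprod (B : Finset X) (k : ℕ) : k ^ #B = ∏ a, if a ∈ B then k else 1 := by
      simp [prod_ite_mem]
    rw [← card_univ, hprod univ, hprod A, hprod Z, hprod Z, ← prod_mul_distrib, ← prod_mul_distrib,
      ← prod_mul_distrib]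
    refine prod_congr rfl fun a _ => ?_
    by_cases ha : a ∈ A
    · simp [F, ha, disjoint_left.mp hAZ ha]
    · by_cases hz : a ∈ Z <;> simp [F, ha, hz, card_compl, q]
  have hbernoulli : q ^ #Z ≤ 2 * (q - #G) ^ #Z :=
    pow_le_two_mul_sub_pow Fintype.card_pos (card_le_univ G) hG
  have hpos : 0 < (q - #G) ^ #Z := by
    have : 0 < q ^ #Z := pow_pos Fintype.card_pos _
    omega
  rw [hF, Fintype.card_piFinset]
  refine le_of_mul_le_mul_right ?_ hpos
  calc _ = q ^ #A * q ^ #Z * ∏ a, #(F a) := hfactor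
    _ ≤ q ^ #A * (2 * (q - #G) ^ #Z) * ∏ a, #(F a) := by gcongr
    _ = _ := by ring

lemma exists_card_le_mul_card_extending [Fintype X] [DecidableEq X] [DecidableEq κ]
    {I : Finset ι} {G : Finset κ} {s : ℕ} {A Z : ι → Finset X} (g : ι → X → κ)
    (hA : ∀ i ∈ I, #(A i) ≤ s) (hAZ : ∀ i ∈ I, Disjoint (A i) (Z i))
    (hG : ∀ i ∈ I, 2 * #(Z i) * #G ≤ Fintype.card κ) :
    ∃ h : X → κ, #I ≤ 2 * Fintype.card κ ^ s *
      #{i ∈ I | (∀ a ∈ A i, h a = g i a) ∧ ∀ z ∈ Z i, h z ∉ G} := by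
  have hsum : ∑ _h : X → κ, #I ≤ ∑ h : X → κ, 2 * Fintype.card κ ^ s *
      #{i ∈ I | (∀ a ∈ A i, h a = g i a) ∧ ∀ z ∈ Z i, h z ∉ G} :=
    calc ∑ _h : X → κ, #I = ∑ _i ∈ I, Fintype.card κ ^ Fintype.card X := by
          simp [mul_comm]
      _ ≤ ∑ i ∈ I, 2 * Fintype.card κ ^ s *
            #{h : X → κ | (∀ a ∈ A i, h a = g i a) ∧ ∀ z ∈ Z i, h z ∉ G} :=
          sum_le_sum fun i hi => (card_pow_le_mul_card_extensions (g i) (hAZ i hi) (hG i hi)).trans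
            (by gcongr; exacts [Fintype.card_pos, hA i hi])
      _ = _ := by
          rw [← mul_sum, ← mul_sum]
          congr 1
          exact sum_card_bipartiteAbove_eq_sum_card_bipartiteBelow _
  obtain ⟨h, -, hh⟩ := exists_le_of_sum_le univ_nonempty hsum
  exact ⟨h, hh⟩

/-- A uniformly random colouring works on average: it takes prescribed injective values on `S i`
with probability at least `(card κ) ^ (-t)`, and then avoids `K` on `Z i` with probability at least
`1 / 2` by Bernoulli's inequality. -/
lemma exists_rainbow_coloring [Finite X] {t l : ℕ} {I : Finset ι} {S Z : ι → Finset X}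
    (ht : t ≤ Fintype.card κ) (hl : 2 * l * t ≤ Fintype.card κ) (hS : ∀ i ∈ I, #(S i) ≤ t)
    (hZ : ∀ i ∈ I, #(Z i) ≤ l) (hSZ : ∀ i ∈ I, Disjoint (S i) (Z i)) :
    ∃ (h : X → κ) (K : Finset κ), ∃ J ⊆ I, #K = t ∧ #I ≤ 2 * Fintype.card κ ^ t * #J ∧
      ∀ i ∈ J, Set.InjOn h (S i) ∧ (∀ a ∈ S i, h a ∈ K) ∧ ∀ z ∈ Z i, h z ∉ K := by
  classical
  have := Fintype.ofFinite X
  obtain ⟨K, -, hK⟩ := exists_subset_card_eq (s := (univ : Finset κ)) ht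
  have hinj : ∀ i ∈ I, ∃ g : X → κ, (S i : Set X) ⊆ g ⁻¹' K ∧ Set.InjOn g (S i) := fun i hi =>
    (S i).finite_toSet.exists_injOn_of_encard_le (by simpa [hK] using hS i hi)
  choose! g hgK hginj using hinj
  obtain ⟨h, hh⟩ := exists_card_le_mul_card_extending (G := K) g hS hSZ fun i hi =>
    le_trans (by rw [hK]; gcongr; exact hZ i hi) hl
  refine ⟨h, K, _, filter_subset _ _, hK, hh, fun i hi => ?_⟩
  obtain ⟨hiI, hext, havoid⟩ := mem_filter.mp hi
  refine ⟨(hginj i hiI).congr fun a ha => (hext a ha).symm, fun a ha => ?_, havoid⟩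
  exact hext a ha ▸ hgK i hiI ha

end Coloring

section DualCertificate

open scoped RealInnerProductSpace

variable {F : Type*} [NormedAddCommGroup F] [InnerProductSpace ℝ F] {E : ℝ} {z : F}

lemma exists_norm_eq_one_forall_inner_add_lt {K : Set F} (hne : K.Nonempty)
    (hcomplete : IsComplete K) (hconvex : Convex ℝ K) (hE : 0 ≤ E) (hfar : ∀ w ∈ K, E < ‖z - w‖) :
    ∃ u : F, ‖u‖ = 1 ∧ ∀ w ∈ K, ⟪u, w⟫ + E < ⟪u, z⟫ := by
  obtain ⟨p, hpK, hp⟩ := exists_norm_eq_iInf_of_complete_convex hne hcomplete hconvex z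
  have hobtuse := (norm_eq_iInf_iff_real_inner_le_zero hconvex hpK).mp hp
  have hpos : 0 < ‖z - p‖ := hE.trans_lt (hfar p hpK)
  refine ⟨‖z - p‖⁻¹ • (z - p), ?_, fun w hw => ?_⟩
  · rw [norm_smul, norm_inv, norm_norm, inv_mul_cancel₀ hpos.ne']
  · have hgap : ‖z - p‖ * ‖z - p‖ ≤ ⟪z - p, z⟫ - ⟪z - p, w⟫ := by
      have := hobtuse w hw
      rw [← real_inner_self_eq_norm_mul_norm, ← inner_sub_right]
      simp only [inner_sub_right] at this ⊢
      linarith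
    rw [real_inner_smul_left, real_inner_smul_left, inv_mul_eq_div, inv_mul_eq_div,
      ← lt_sub_iff_add_lt', ← sub_div]
    exact (hfar p hpK).trans_le ((le_div_iff₀ hpos).mpr hgap)

lemma exists_norm_eq_one_add_mul_abs_inner_lt {ι : Type*} [Fintype ι] {s : Finset ι} {v : ι → F}
    {B : ℝ} (hE : 0 ≤ E) (hB : 0 ≤ B)
    (hfar : ∀ x : ι → ℝ, ∑ j, |x j| ≤ B → E < ‖z - ∑ j ∈ s, x j • v j‖) :
    ∃ u : F, ‖u‖ = 1 ∧ E < ⟪u, z⟫ ∧ ∀ j ∈ s, E + B * |⟪u, v j⟫| < ⟪u, z⟫ := by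
  classical
  let combine : PiLp 1 (fun _ : ι => ℝ) →ₗ[ℝ] F := ∑ j ∈ s,
    (LinearMap.proj j ∘ₗ (WithLp.linearEquiv 1 ℝ (ι → ℝ)).toLinearMap).smulRight (v j)
  have hcombine (x : PiLp 1 fun _ : ι => ℝ) : combine x = ∑ j ∈ s, x j • v j := by
    simp [combine]
  have hball (x : ι → ℝ) : WithLp.toLp 1 x ∈ Metric.closedBall (0 : PiLp 1 fun _ : ι => ℝ) B ↔
      ∑ j, |x j| ≤ B := by
    rw [mem_closedBall_zero_iff, PiLp.norm_eq_of_L1]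
    rfl
  obtain ⟨u, hu, hsep⟩ := exists_norm_eq_one_forall_inner_add_lt
    (K := combine '' Metric.closedBall 0 B) ((Metric.nonempty_closedBall.mpr hB).image _)
    ((isCompact_closedBall 0 B).image combine.continuous_of_finiteDimensional).isComplete
    ((convex_closedBall 0 B).linear_image combine) hE (z := z) (by
      rintro _ ⟨x, hx, rfl⟩
      rw [hcombine]
      exact hfar x ((hball x).mp hx))
  have hgap (x : ι → ℝ) (hx : ∑ j, |x j| ≤ B) : ⟪u, ∑ j ∈ s, x j • v j⟫ + E < ⟪u, z⟫ := by
    simpa only [hcombine] using hsep _ ⟨_, (hball x).mpr hx, rfl⟩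
  refine ⟨u, hu, by simpa using hgap 0 (by simpa using hB), fun j hj => ?_⟩
  have hsingle (y : ℝ) (hy : |y| = B) : y * ⟪u, v j⟫ + E < ⟪u, z⟫ := by
    have := hgap (Pi.single j y) (by simp [Pi.single_apply, apply_ite, hy])
    simpa [Pi.single_apply, ite_smul, hj, inner_smul_right] using this
  have hplus := hsingle B (abs_of_nonneg hB)
  have hminus := hsingle (-B) ((abs_neg B).trans (abs_of_nonneg hB))
  obtain h | h := abs_choice ⟪u, v j⟫ <;> rw [h] <;> linarith

end DualCertificate

section HardThreshold

variable {X : Type*} {τ : ℝ} {u v : X → ℝ}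

/-- Hard thresholding, the truncation of a vector to its entries of absolute value above `τ`. -/
def hardThreshold (τ : ℝ) (u : X → ℝ) (a : X) : ℝ :=
  if τ < |u a| then u a else 0

lemma abs_hardThreshold_sub_le (hτ : 0 ≤ τ) (a : X) : |hardThreshold τ u a - u a| ≤ τ := by
  rw [hardThreshold]
  split_ifs with h
  · simpa using hτ
  · simpa using not_lt.mp h

variable [Fintype X]

lemma sq_mul_card_support_hardThreshold_le (hτ : 0 ≤ τ) :
    τ ^ 2 * #{a | hardThreshold τ u a ≠ 0} ≤ ∑ a, u a ^ 2 :=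
  calc τ ^ 2 * #{a | hardThreshold τ u a ≠ 0} = ∑ a with hardThreshold τ u a ≠ 0, τ ^ 2 := by
        rw [sum_const, nsmul_eq_mul, mul_comm]
    _ ≤ ∑ a with hardThreshold τ u a ≠ 0, u a ^ 2 := sum_le_sum fun a ha => by
        have hlt : τ < |u a| := by_contra fun hle => (mem_filter.mp ha).2 (if_neg hle)
        rw [← sq_abs (u a)]
        exact pow_le_pow_left₀ hτ hlt.le 2
    _ ≤ ∑ a, u a ^ 2 :=
      sum_le_sum_of_subset_of_nonneg (filter_subset _ _) fun a _ _ => sq_nonneg (u a)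

lemma abs_sum_hardThreshold_mul_sub_le {t : ℕ} {M : ℝ} (hτ : 0 ≤ τ) (hM : 0 ≤ M)
    (hv : #{a | v a ≠ 0} ≤ t) (hvM : ∀ a, |v a| ≤ M) :
    |∑ a, hardThreshold τ u a * v a - ∑ a, u a * v a| ≤ t * (τ * M) := by
  rw [← sum_sub_distrib]
  simp only [← sub_mul]
  have hvanish : ∀ a ∈ univ, (hardThreshold τ u a - u a) * v a ≠ 0 → v a ≠ 0 :=
    fun a _ h => right_ne_zero_of_mul h
  rw [← sum_filter_of_ne hvanish]
  calc _ ≤ ∑ a with v a ≠ 0, |(hardThreshold τ u a - u a) * v a| := abs_sum_le_sum_abs _ _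
    _ ≤ #{a | v a ≠ 0} • (τ * M) := sum_le_card_nsmul _ _ _ fun a _ => by
      rw [abs_mul]
      exact mul_le_mul (abs_hardThreshold_sub_le hτ a) (hvM a) (abs_nonneg _) hτ
    _ ≤ t * (τ * M) := by
      rw [nsmul_eq_mul]
      gcongr

end HardThreshold

section Certificates

variable {ι X κ : Type*}

/-- Passing to colours preserves inner products: where `u i` and `v j` are both nonzero on a colour
of `K`, both `i` and `j` carry the same label there. -/
lemma agreementPairing_eq_sum_mul [Fintype X] [DecidableEq X] [DecidableEq κ] {h : X → κ}
    {K : Finset κ} {S : ι → Finset X} {x : ι → κ → X} {u v : ι → X → ℝ} {i j : ι}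
    (hxi : ∀ a ∈ S i, x i (h a) = a) (hxj : ∀ a ∈ S j, x j (h a) = a) (hK : ∀ a ∈ S j, h a ∈ K)
    (hu : ∀ a, u i a ≠ 0 → h a ∈ K → a ∈ S i) (hv : ∀ a, v j a ≠ 0 → a ∈ S j) :
    agreementPairing x (fun i c => if h (x i c) = c then u i (x i c) else 0)
      (fun j c => v j (x j c)) K i j = ∑ a, u i a * v j a := by
  have hsupp : ∀ a, u i a * v j a ≠ 0 → h a ∈ K → a ∈ S i ∩ S j := fun a ha haK =>
    mem_inter.mpr ⟨hu a (left_ne_zero_of_mul ha) haK, hv a (right_ne_zero_of_mul ha)⟩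
  have hinj : Set.InjOn h (S i ∩ S j : Finset X) := fun a ha b hb hab => by
    rw [← hxi a (mem_inter.mp ha).1, hab, hxi b (mem_inter.mp hb).1]
  rw [← sum_subset (subset_univ (S i ∩ S j)) fun a _ ha => by_contra fun hne =>
    ha (hsupp a hne (hK a (hv a (right_ne_zero_of_mul hne))))]
  symm
  refine sum_of_injOn h hinj (fun a ha => ?_) (fun c hc hcimage => ?_) fun a ha => ?_
  · obtain ⟨hai, haj⟩ := mem_inter.mp ha
    exact mem_filter.mpr ⟨hK a haj, (hxi a hai).trans (hxj a haj).symm⟩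
  · obtain ⟨hcK, hxc⟩ := mem_filter.mp hc
    dsimp only
    rw [← hxc]
    split_ifs with hlabel
    · exact by_contra fun hne =>
        hcimage ⟨x i c, hsupp _ hne (hlabel.symm ▸ hcK), hlabel⟩
    · exact zero_mul _
  · obtain ⟨hai, haj⟩ := mem_inter.mp ha
    simp only [hxi a hai, hxj a haj, if_true]

lemma isSeparated_of_abs_sub_le [DecidableEq X] {t : ℕ} {I : Finset ι} {K : Finset κ}
    {x : ι → κ → X} {u w : ι → κ → ℝ} {G : ι → ι → ℝ} {δ E : ℝ} (hK : #K = t) (hδ : 0 ≤ δ)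
    (hE : 2 ^ t * δ ≤ E) (hG : ∀ i ∈ I, ∀ j ∈ I, |agreementPairing x u w K i j - G i j| ≤ δ)
    (hself : ∀ i, E < G i i) (hother : ∀ i j, j ≠ i → E + 2 ^ t * |G i j| < G i i) :
    IsSeparated x u w K I fun i => (G i i - E) / 2 ^ t + δ := by
  have hpow : (0 : ℝ) < 2 ^ t := by positivity
  have hgap (i : ι) : 0 < (G i i - E) / 2 ^ t := div_pos (sub_pos.mpr (hself i)) hpow
  refine ⟨fun i _ => add_nonneg (hgap i).le hδ, fun i hi j hj hji => ?_, fun i hi => ?_⟩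
  · have hsmall : |G i j| ≤ (G i i - E) / 2 ^ t := by
      rw [le_div_iff₀' hpow]
      linarith [hother i j hji]
    linarith [hG i hi j hj, abs_sub_abs_le_abs_sub (agreementPairing x u w K i j) (G i j)]
  · rw [hK]
    have hlower := (abs_le.mp (hG i hi i hi)).1
    have hmul : 2 ^ t * ((G i i - E) / 2 ^ t) = G i i - E := mul_div_cancel₀ _ hpow.ne'
    linarith [hgap i]

lemma exists_agreementPairing_eq_sum_mul [Fintype ι] [Fintype X] [Nonempty X] [DecidableEq X]
    {t l : ℕ} {u v : ι → X → ℝ} (ht : 1 ≤ t) (hl : 1 ≤ l) (hv : ∀ i, #{a | v i a ≠ 0} ≤ t)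
    (hu : ∀ i, #{a | u i a ≠ 0} ≤ l) :
    ∃ (x : ι → Fin (2 * l * t) → X) (u' w : ι → Fin (2 * l * t) → ℝ) (K : Finset (Fin (2 * l * t)))
      (J : Finset ι), #K = t ∧ Fintype.card ι ≤ 2 * (2 * l * t) ^ t * #J ∧
        ∀ i ∈ J, ∀ j ∈ J, agreementPairing x u' w K i j = ∑ a, u i a * v j a := by
  have hQ : t ≤ 2 * l * t := Nat.le_mul_of_pos_left t (by positivity)
  have : NeZero (2 * l * t) := ⟨by omega⟩
  set S : ι → Finset X := fun i => {a | v i a ≠ 0}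
  set L : ι → Finset X := fun i => {a | u i a ≠ 0}
  obtain ⟨h, K, J, -, hK, hcard, hJ⟩ := exists_rainbow_coloring (κ := Fin (2 * l * t)) (I := univ)
    (S := S) (Z := fun i => L i \ S i) (by simpa using hQ) (Fintype.card_fin _).ge (fun i _ => hv i)
    (fun i _ => (card_le_card sdiff_subset).trans (hu i)) fun i _ => disjoint_sdiff
  rw [card_univ, Fintype.card_fin] at hcard
  set x : ι → Fin (2 * l * t) → X := fun i => Function.invFunOn h (S i)
  have hx : ∀ i ∈ J, ∀ a ∈ S i, x i (h a) = a := fun i hi a ha => (hJ i hi).1.leftInvOn_invFunOn ha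
  have huS : ∀ i ∈ J, ∀ a, u i a ≠ 0 → h a ∈ K → a ∈ S i := fun i hi a ha haK =>
    by_contra fun haS =>
      (hJ i hi).2.2 a (mem_sdiff.mpr ⟨mem_filter.mpr ⟨mem_univ a, ha⟩, haS⟩) haK
  exact ⟨x, _, _, K, J, hK, hcard, fun i hi j hj => agreementPairing_eq_sum_mul (hx i hi) (hx j hj)
    (hJ j hj).2.1 (huS i hi) fun a ha => mem_filter.mpr ⟨mem_univ a, ha⟩⟩

lemma card_le_of_certificates [Fintype ι] [Fintype X] {t l : ℕ} {u v : ι → X → ℝ} {M E : ℝ}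
    (ht : 1 ≤ t) (hl : 1 ≤ l) (hM : 0 ≤ M) (hv : ∀ i, #{a | v i a ≠ 0} ≤ t)
    (hvM : ∀ i a, |v i a| ≤ M) (hu : ∀ i, ∑ a, u i a ^ 2 ≤ 1)
    (hE : 2 ^ t * (t * ((√l)⁻¹ * M)) ≤ E) (hself : ∀ i, E < ∑ a, u i a * v i a)
    (hother : ∀ i j, j ≠ i → E + 2 ^ t * |∑ a, u i a * v j a| < ∑ a, u i a * v i a) :
    Fintype.card ι ≤ 2 * (2 * l * t) ^ t * ((t + 1) ^ (4 * t) * Fintype.card X) := by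
  classical
  obtain hι | ⟨⟨i₀⟩⟩ := isEmpty_or_nonempty ι
  · simp
  have hEnonneg : 0 ≤ E := le_trans (by positivity) hE
  obtain ⟨a₀, -, -⟩ := exists_ne_zero_of_sum_ne_zero (hEnonneg.trans_lt (hself i₀)).ne'
  have : Nonempty X := ⟨a₀⟩
  have hlarge : ∀ i, #{a | hardThreshold (√l)⁻¹ (u i) a ≠ 0} ≤ l := fun i => by
    have hl' : (0 : ℝ) < l := by exact_mod_cast hl
    have hmarkov :=
      (sq_mul_card_support_hardThreshold_le (τ := (√l)⁻¹) (by positivity)).trans (hu i)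
    rw [inv_pow, Real.sq_sqrt hl'.le, inv_mul_le_one₀ hl'] at hmarkov
    exact_mod_cast hmarkov
  obtain ⟨x, u', w, K, J, hK, hcard, hpair⟩ := exists_agreementPairing_eq_sum_mul ht hl hv hlarge
  have hsep : IsSeparated x u' w K J _ :=
    isSeparated_of_abs_sub_le hK (by positivity) hE (fun i hi j hj => hpair i hi j hj ▸
      abs_sum_hardThreshold_mul_sub_le (by positivity) hM (hv j) (hvM j)) hself hother
  exact hcard.trans (Nat.mul_le_mul_left _ (hsep.card_le hK.le))

end Certificates

section Approximation

open scoped RealInnerProductSpace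

variable {ι X : Type*} [Fintype ι] [Fintype X]

lemma exists_approx_of_lt_card [DecidableEq ι] {t l : ℕ} {v : ι → X → ℝ} {M : ℝ} (ht : 1 ≤ t)
    (hl : 1 ≤ l) (hM : 0 ≤ M) (hv : ∀ i, #{a | v i a ≠ 0} ≤ t) (hvM : ∀ i a, |v i a| ≤ M)
    (hcard : 2 * (2 * l * t) ^ t * ((t + 1) ^ (4 * t) * Fintype.card X) < Fintype.card ι) :
    ∃ (i : ι) (x : ι → ℝ), ∑ j, |x j| ≤ 2 ^ t ∧
      √(∑ a, (v i - ∑ j ∈ univ.erase i, x j • v j) a ^ 2) ≤ 2 ^ t * (t * ((√l)⁻¹ * M)) := by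
  by_contra! hfar
  have hcertificate (i : ι) := exists_norm_eq_one_add_mul_abs_inner_lt (s := univ.erase i)
    (z := WithLp.toLp 2 (v i)) (v := fun j => WithLp.toLp 2 (v j))
    (E := 2 ^ t * (t * ((√l)⁻¹ * M))) (B := 2 ^ t) (by positivity) (by positivity) fun x hx => by
      rw [EuclideanSpace.norm_eq]
      simpa using hfar i x hx
  choose u hu hself hother using hcertificate
  have hinner (i j : ι) : ⟪u i, WithLp.toLp 2 (v j)⟫ = ∑ a, u i a * v j a := by
    simp [PiLp.inner_apply, mul_comm]
  simp only [hinner] at hself hother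
  refine hcard.not_ge (card_le_of_certificates ht hl hM hv hvM (fun i => ?_) le_rfl hself
    fun i j hji => hother i j (mem_erase.mpr ⟨hji, mem_univ j⟩))
  rw [← EuclideanSpace.real_norm_sq_eq, hu i, one_pow]

lemma sqrt_sum_sq_le_sqrt_mul {t : ℕ} {v : X → ℝ} {M : ℝ} (hM : 0 ≤ M) (hv : #{a | v a ≠ 0} ≤ t)
    (hvM : ∀ a, |v a| ≤ M) : √(∑ a, v a ^ 2) ≤ √t * M := by
  rw [← Real.sqrt_sq hM, ← Real.sqrt_mul t.cast_nonneg]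
  refine Real.sqrt_le_sqrt ?_
  calc ∑ a, v a ^ 2 = ∑ a with v a ≠ 0, v a ^ 2 :=
        (sum_filter_of_ne fun a _ h => pow_ne_zero_iff two_ne_zero |>.mp h).symm
    _ ≤ #{a | v a ≠ 0} • M ^ 2 := sum_le_card_nsmul _ _ _ fun a _ => sq_le_sq.mpr
        ((hvM a).trans (le_abs_self M))
    _ ≤ t * M ^ 2 := by
      rw [nsmul_eq_mul]
      gcongr

lemma exists_threshold {t : ℕ} {y : ℝ} (ht : 1 ≤ t) (hy : 0 < y) (hy1 : 4 ^ (t + 2) * y ≤ 1) :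
    ∃ l : ℕ, 1 ≤ l ∧ 2 ^ t * (t * (√l)⁻¹) ≤ 4 ^ (t + 2) * √t * y ∧
      2 * (2 * l * t : ℝ) ^ t * (t + 1) ^ (4 * t) * y ^ (4 * t) < 1 := by
  set q : ℝ := 2 ^ t
  have hq1 : 1 ≤ q := one_le_pow₀ one_le_two
  have hq4 : (4 : ℝ) ^ (t + 2) = 16 * q ^ 2 := by
    rw [← pow_mul, mul_comm t, pow_mul, pow_add, mul_comm]
    norm_num
  rw [hq4] at hy1 ⊢
  have ht1 : (1 : ℝ) ≤ t := by exact_mod_cast ht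
  have htq : (t : ℝ) + 1 ≤ q := by
    simp only [q]
    exact_mod_cast Nat.lt_two_pow_self (n := t)
  have hqy : 16 * q * y ≤ 1 := by nlinarith
  set L : ℝ := t / (16 * q * y) ^ 2
  have hL : 1 ≤ L := (one_le_div (by positivity)).mpr
    ((pow_le_one₀ (by positivity) hqy).trans ht1)
  have hceil : (⌈L⌉₊ : ℝ) ≤ 2 * L := by linarith [Nat.ceil_lt_add_one (zero_le_one.trans hL)]
  refine ⟨⌈L⌉₊, Nat.one_le_ceil_iff.mpr (by positivity), ?_, ?_⟩
  · have hsqrt : √t / (16 * q * y) ≤ √⌈L⌉₊ := by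
      rw [← Real.sqrt_sq (show 0 ≤ 16 * q * y by positivity), ← Real.sqrt_div t.cast_nonneg]
      exact Real.sqrt_le_sqrt (Nat.le_ceil L)
    calc q * (t * (√⌈L⌉₊)⁻¹) ≤ q * (t * (√t / (16 * q * y))⁻¹) := by gcongr
      _ = 16 * q ^ 2 * (t / √t) * y := by field_simp
      _ = 16 * q ^ 2 * √t * y := by rw [Real.div_sqrt]
  · have hbase : 2 * ⌈L⌉₊ * t * (t + 1) ^ 4 * y ^ 4 ≤ 1 / 4 :=
      calc 2 * ⌈L⌉₊ * t * (t + 1) ^ 4 * y ^ 4 ≤ 2 * (2 * L) * t * q ^ 4 * y ^ 4 := by gcongr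
        _ = t ^ 2 * q ^ 2 * y ^ 2 / 64 := by simp only [L]; field_simp; norm_num
        _ ≤ q ^ 2 * q ^ 2 * y ^ 2 / 64 := by gcongr; linarith
        _ = (16 * q ^ 2 * y) ^ 2 / 16384 := by ring
        _ ≤ 1 / 4 := by linarith [pow_le_one₀ (n := 2) (by positivity) hy1]
    calc _ = 2 * (2 * ⌈L⌉₊ * t * (t + 1) ^ 4 * y ^ 4) ^ t := by
          simp only [mul_pow, ← pow_mul, mul_assoc]
      _ ≤ 2 * (2 * ⌈L⌉₊ * t * (t + 1) ^ 4 * y ^ 4) := by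
        gcongr
        exact pow_le_of_le_one (by positivity) (by linarith) (by omega)
      _ < 1 := by linarith

lemma exists_approx_of_card_le [Nonempty ι] [DecidableEq ι] {t : ℕ} {v : ι → X → ℝ} {M y : ℝ}
    (ht : 1 ≤ t) (hM : 0 ≤ M) (hv : ∀ i, #{a | v i a ≠ 0} ≤ t) (hvM : ∀ i a, |v i a| ≤ M)
    (hy : 0 < y) (hcard : Fintype.card X ≤ y ^ (4 * t) * Fintype.card ι) :
    ∃ (i : ι) (x : ι → ℝ), ∑ j, |x j| ≤ 2 ^ t ∧
      √(∑ a, (v i - ∑ j ∈ univ.erase i, x j • v j) a ^ 2) ≤ 4 ^ (t + 2) * √t * y * M := by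
  obtain hsmall | hlarge := le_total (4 ^ (t + 2) * y) 1
  · obtain ⟨l, hl, herror, hcount⟩ := exists_threshold ht hy hsmall
    have hlt : 2 * (2 * l * t) ^ t * ((t + 1) ^ (4 * t) * Fintype.card X) < Fintype.card ι := by
      have hι : (0 : ℝ) < Fintype.card ι := by exact_mod_cast Fintype.card_pos
      rify
      calc _ ≤ 2 * (2 * l * t : ℝ) ^ t * ((t + 1) ^ (4 * t) * (y ^ (4 * t) * Fintype.card ι)) := by
            gcongr
        _ = 2 * (2 * l * t : ℝ) ^ t * (t + 1) ^ (4 * t) * y ^ (4 * t) * Fintype.card ι := by ring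
        _ < Fintype.card ι := mul_lt_of_lt_one_left hι hcount
    obtain ⟨i, x, hx, hix⟩ := exists_approx_of_lt_card ht hl hM hv hvM hlt
    refine ⟨i, x, hx, hix.trans ?_⟩
    calc _ = 2 ^ t * (t * (√l)⁻¹) * M := by ring
      _ ≤ _ := by gcongr
  · obtain ⟨i⟩ := ‹Nonempty ι›
    refine ⟨i, 0, by simp, ?_⟩
    calc _ ≤ √t * M := by simpa using sqrt_sum_sq_le_sqrt_mul hM (hv i) (hvM i)
      _ ≤ 4 ^ (t + 2) * y * (√t * M) := le_mul_of_one_le_left (by positivity) hlarge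
      _ = _ := by ring

theorem stmt13_general [Nonempty ι] [DecidableEq ι] {t : ℕ} (ht : 1 ≤ t) (v : ι → X → ℝ)
    (hv : ∀ i, {a | v i a ≠ 0}.ncard ≤ t) :
    ∃ (i : ι) (x : ι → ℝ), ∑ j, |x j| ≤ 2 ^ t ∧
      √(∑ a, (v i - ∑ j ∈ univ.erase i, x j • v j) a ^ 2) ≤
        4 ^ (t + 2) * √t * ((Fintype.card X : ℝ) / Fintype.card ι) ^ ((1 : ℝ) / (4 * t)) *
          ⨆ j, ⨆ a, |v j a| := by
  have hM : 0 ≤ ⨆ j, ⨆ a, |v j a| :=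
    Real.iSup_nonneg fun j => Real.iSup_nonneg fun a => abs_nonneg (v j a)
  have hvM (i : ι) (a : X) : |v i a| ≤ ⨆ j, ⨆ a, |v j a| :=
    (le_ciSup (Set.finite_range fun a => |v i a|).bddAbove a).trans
      (le_ciSup (Set.finite_range fun j => ⨆ a, |v j a|).bddAbove i)
  obtain hX | hX := isEmpty_or_nonempty X
  · obtain ⟨i⟩ := ‹Nonempty ι›
    exact ⟨i, 0, by simp, by simp⟩
  refine exists_approx_of_card_le ht hM (fun i => ?_) hvM (by positivity) (le_of_eq ?_)
  · rw [← Set.ncard_coe_finset, coe_filter_univ]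
    exact hv i
  · rw [← Real.rpow_natCast, ← Real.rpow_mul (by positivity)]
    have : ((1 : ℝ) / (4 * t)) * (4 * t : ℕ) = 1 := by
      push_cast
      field_simp
    rw [this, Real.rpow_one, div_mul_cancel₀]
    positivity

end Approximation

/-- among enough sparse real vectors, one is efficiently approximated
by the others. -/
theorem stmt13 (n N t : ℕ) (ht : 1 ≤ t) (hN : 1 ≤ N)
    (v : Fin N → Fin n → ℝ) (hsp : ∀ i, SparseVec t (v i)) :
    ∃ (i : Fin N) (x : Fin N → ℝ), l1norm x ≤ 3 ^ t ∧
      l2norm (v i - ∑ j ∈ Finset.univ.erase i, x j • v j) ≤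
        4 ^ (t + 2) * Real.sqrt t * ((n : ℝ) / N) ^ ((1 : ℝ) / (4 * t)) *
          ⨆ j, ⨆ k, |v j k| := by
  have : NeZero N := ⟨by omega⟩
  obtain ⟨i, x, hx, hix⟩ := stmt13_general ht v hsp
  exact ⟨i, x, hx.trans (by gcongr; norm_num), by simpa only [l2norm, Fintype.card_fin] using hix⟩
end
end

section
/- Let n, m ∈ ℕ with m ≥ 1, let Σ be an n×n positive semidefinite real matrix, let w* ∈ ℝⁿ, let W ⊆ ℝⁿ, let 𝕏 be a real m×n matrix, let ξ ∈ ℝᵐ, and set y := 𝕏w* + ξ. Let ε ∈ (0, 1/2], σ ≥ 0, and n_eff ≥ 0. Assume that for all w ∈ W: (1) |(1/m)·‖𝕏(w−w*)‖₂² − ‖w−w*‖_Σ²| ≤ ε·‖w−w*‖_Σ², and (2) |⟨ξ, 𝕏(w−w*)⟩| ≤ σ·√(n_eff)·‖𝕏(w−w*)‖₂. Let ŵ ∈ W satisfy ‖𝕏ŵ − y‖₂² ≤ ‖𝕏w − y‖₂² for all w ∈ W. Then for every w₀ ∈ W, ‖ŵ − w*‖_Σ ≤ √((1+ε)/(1−ε))·‖w₀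 − w*‖_Σ + 2σ·√(2·n_eff/m). -/
open Matrix MeasureTheory ProbabilityTheory
open scoped BigOperators ENNReal

noncomputable section

/-!
With `u = X(ŵ - w*)` and `v = X(w₀ - w*)`, comparing the empirical risks of `ŵ` and `w₀` gives
`‖u‖² - ‖v‖² ≤ 2⟨u - v, ξ⟩ ≤ 2s (‖u‖ + ‖v‖)` where `s = σ√n_eff`, and dividing by `‖u‖ + ‖v‖` leaves
`‖u‖ ≤ ‖v‖ + 2s`. The near-isometry of `X/√m` for `‖·‖_Σ` turns this into the bound on `ŵ - w*`.
Only the differences of predictions at `w` and `w*` enter, so the argument makes sense for an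
arbitrary prediction map `f` in place of `X`.
-/

section SqrtBounds

variable {a b c : ℝ}

theorem le_div_sqrt_of_mul_sq_le_sq (hc : 0 < c) (hb : 0 ≤ b) (h : c * a ^ 2 ≤ b ^ 2) :
    a ≤ b / √c := by
  have hsq : a ^ 2 ≤ b ^ 2 / c := by rwa [le_div_iff₀' hc]
  calc
    a ≤ √(b ^ 2 / c) := Real.le_sqrt_of_sq_le hsq
    _ = b / √c := by rw [Real.sqrt_div' _ hc.le, Real.sqrt_sq hb]

theorem le_sqrt_mul_of_sq_le_mul_sq (hb : 0 ≤ b) (h : a ^ 2 ≤ c * b ^ 2) : a ≤ √c * b :=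
  calc
    a ≤ √(c * b ^ 2) := Real.le_sqrt_of_sq_le h
    _ = √c * b := by rw [Real.sqrt_mul' _ (sq_nonneg b), Real.sqrt_sq hb]

theorem sqrt_div_sqrt_mul_one_sub_le {ε : ℝ} (ha : 0 ≤ a) (hb : 0 < b) (hε : ε ≤ 1 / 2) :
    √a / √(b * (1 - ε)) ≤ √(2 * a / b) := by
  have hε' : 0 < 1 - ε := by linarith
  rw [← Real.sqrt_div ha]
  refine Real.sqrt_le_sqrt ?_
  rw [div_le_div_iff₀ (mul_pos hb hε') hb]
  have hab : 0 ≤ a * b := by positivity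
  nlinarith

end SqrtBounds

theorem abs_one_div_mul_sub_le_iff {m x y ε : ℝ} (hm : 0 < m) :
    |1 / m * x - y| ≤ ε * y ↔ m * (1 - ε) * y ≤ x ∧ x ≤ m * (1 + ε) * y := by
  rw [abs_le, one_div_mul_eq_div, neg_le_sub_iff_le_add, sub_le_iff_le_add,
    ← sub_le_iff_le_add, le_div_iff₀ hm, div_le_iff₀ hm]
  ring_nf

theorem norm_le_norm_add_of_norm_sub_sq_le {F : Type*} [SeminormedAddCommGroup F]
    [InnerProductSpace ℝ F] {u v ξ : F} {s : ℝ} (hs : 0 ≤ s)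
    (h : ‖u - ξ‖ ^ 2 ≤ ‖v - ξ‖ ^ 2) (hu : inner ℝ u ξ ≤ s * ‖u‖)
    (hv : -(s * ‖v‖) ≤ inner ℝ v ξ) : ‖u‖ ≤ ‖v‖ + 2 * s := by
  rw [norm_sub_sq_real, norm_sub_sq_real] at h
  have hfactor : ‖u‖ * (‖u‖ + ‖v‖) ≤ (‖v‖ + 2 * s) * (‖u‖ + ‖v‖) := by linarith
  by_contra! hlt
  have hpos : 0 < ‖u‖ + ‖v‖ := by linarith [norm_nonneg v]
  exact hlt.not_ge (le_of_mul_le_mul_right hfactor hpos)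

theorem l2norm_eq_norm_toLp_s14 {k : ℕ} (v : Fin k → ℝ) : l2norm v = ‖WithLp.toLp 2 v‖ := by
  simp only [l2norm, EuclideanSpace.norm_eq, Real.norm_eq_abs, sq_abs]

theorem dotProduct_eq_inner_toLp {ι : Type*} [Fintype ι] (u v : ι → ℝ) :
    u ⬝ᵥ v = inner ℝ (WithLp.toLp 2 v) (WithLp.toLp 2 u) :=
  (EuclideanSpace.inner_toLp_toLp v u).symm

/-- `f w`, `d w` and `s` stand for `Xw`, `‖w - w*‖_Σ` and `σ√n_eff`. -/
theorem stmt14_general {E F : Type*} [SeminormedAddCommGroup F] [InnerProductSpace ℝ F]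
    (f : E → F) (d : E → ℝ) (hd : ∀ w, 0 ≤ d w) (wstar : E) (W : Set E) (ξ : F)
    {m ε s : ℝ} (hm : 0 < m) (hε : ε < 1) (hs : 0 ≤ s)
    (hiso : ∀ w ∈ W, |1 / m * ‖f w - f wstar‖ ^ 2 - d w ^ 2| ≤ ε * d w ^ 2)
    (hnoise : ∀ w ∈ W, |inner ℝ (f w - f wstar) ξ| ≤ s * ‖f w - f wstar‖)
    {what : E} (hwhat : what ∈ W)
    (hmin : IsMinOn (fun w => ‖f w - (f wstar + ξ)‖ ^ 2) W what) :
    ∀ w₀ ∈ W, d what ≤ √((1 + ε) / (1 - ε)) * d w₀ + 2 * (s / √(m * (1 - ε))) := by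
  intro w₀ hw₀
  have hc : 0 < m * (1 - ε) := mul_pos hm (sub_pos.2 hε)
  have hrisk : ‖f what - f wstar - ξ‖ ^ 2 ≤ ‖f w₀ - f wstar - ξ‖ ^ 2 := by
    simpa only [sub_sub] using isMinOn_iff.1 hmin w₀ hw₀
  have hpred : ‖f what - f wstar‖ ≤ ‖f w₀ - f wstar‖ + 2 * s :=
    norm_le_norm_add_of_norm_sub_sq_le hs hrisk (abs_le.1 (hnoise what hwhat)).2
      (abs_le.1 (hnoise w₀ hw₀)).1
  have hlower : d what ≤ ‖f what - f wstar‖ / √(m * (1 - ε)) :=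
    le_div_sqrt_of_mul_sq_le_sq hc (norm_nonneg _)
      ((abs_one_div_mul_sub_le_iff hm).1 (hiso what hwhat)).1
  have hupper : ‖f w₀ - f wstar‖ ≤ √(m * (1 + ε)) * d w₀ :=
    le_sqrt_mul_of_sq_le_mul_sq (hd w₀) ((abs_one_div_mul_sub_le_iff hm).1 (hiso w₀ hw₀)).2
  calc
    d what ≤ ‖f what - f wstar‖ / √(m * (1 - ε)) := hlower
    _ ≤ (√(m * (1 + ε)) * d w₀ + 2 * s) / √(m * (1 - ε)) := by gcongr; linarith
    _ = √((m * (1 + ε)) / (m * (1 - ε))) * d w₀ + 2 * (s / √(m * (1 - ε))) := by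
      rw [Real.sqrt_div' _ hc.le]; ring
    _ = √((1 + ε) / (1 - ε)) * d w₀ + 2 * (s / √(m * (1 - ε))) := by
      rw [mul_div_mul_left _ _ hm.ne']

/-- deterministic model-selection bound for the empirical risk minimizer. -/
theorem stmt14 (n m : ℕ) (hm : 1 ≤ m) (A : Matrix (Fin n) (Fin n) ℝ) (hA : A.PosSemidef)
    (wstar : Fin n → ℝ) (W : Set (Fin n → ℝ)) (X : Matrix (Fin m) (Fin n) ℝ) (ξ : Fin m → ℝ)
    (ε σ neff : ℝ) (hε0 : 0 < ε) (hε1 : ε ≤ 1 / 2) (hσ : 0 ≤ σ) (hneff : 0 ≤ neff)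
    (y : Fin m → ℝ) (hy : y = X *ᵥ wstar + ξ)
    (h1 : ∀ w ∈ W, |(1 / (m : ℝ)) * l2norm (X *ᵥ (w - wstar)) ^ 2
        - normSigma A (w - wstar) ^ 2| ≤ ε * normSigma A (w - wstar) ^ 2)
    (h2 : ∀ w ∈ W, |ξ ⬝ᵥ (X *ᵥ (w - wstar))| ≤ σ * Real.sqrt neff * l2norm (X *ᵥ (w - wstar)))
    (what : Fin n → ℝ) (hwhat : what ∈ W)
    (hmin : ∀ w ∈ W, l2norm (X *ᵥ what - y) ^ 2 ≤ l2norm (X *ᵥ w - y) ^ 2) :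
    ∀ w₀ ∈ W, normSigma A (what - wstar) ≤
      Real.sqrt ((1 + ε) / (1 - ε)) * normSigma A (w₀ - wstar)
        + 2 * σ * Real.sqrt (2 * neff / m) := by
  intro w₀ hw₀
  have hm' : (0 : ℝ) < m := Nat.cast_pos.2 hm
  simp only [hy, mulVec_sub, l2norm_eq_norm_toLp_s14, dotProduct_eq_inner_toLp, WithLp.toLp_sub,
    WithLp.toLp_add] at h1 h2 hmin
  refine (stmt14_general (fun w => WithLp.toLp 2 (X *ᵥ w)) (fun w => normSigma A (w - wstar))
    (fun _ => Real.sqrt_nonneg _) wstar W (WithLp.toLp 2 ξ) hm' (by linarith)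
    (mul_nonneg hσ (Real.sqrt_nonneg neff)) h1 h2 hwhat (isMinOn_iff.2 hmin) w₀ hw₀).trans ?_
  rw [mul_div_assoc, mul_assoc 2 σ]
  gcongr
  exact sqrt_div_sqrt_mul_one_sub_le hneff hm' hε1
end
end

section
/- There exists a universal constant C > 0 such that the following holds. Let n, t ∈ ℕ with n ≥ 2 and t ≥ 2, and let Σ be an n×n positive definite real matrix. Then Σ has a (t, C·t^{3/2}·log n)-ℓ1-representation of size at most C·n^{t−1/2}, all of whose elements are t-sparse. -/
open Matrix MeasureTheory ProbabilityTheory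
open scoped BigOperators ENNReal

noncomputable section

/-- `D` is a `(t,B)`-ℓ1-representation for `A`: every `t`-sparse `v` can be written as a
linear combination of the `D i` with ℓ1 cost (weighted by Σ-norms) at most `B·‖v‖_Σ`. -/
def IsL1Rep {k : ℕ} (t : ℕ) (B : ℝ) (A : Matrix (Fin k) (Fin k) ℝ) {N : ℕ}
    (D : Fin N → Fin k → ℝ) : Prop :=
  ∀ v : Fin k → ℝ, SparseVec t v → ∃ a : Fin N → ℝ,
    v = ∑ i, a i • D i ∧ ∑ i, |a i| * normSigma A (D i) ≤ B * normSigma A v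

/-!
Fix `k = t - 2` coordinates and let `K` be their span. An orthonormal basis of `K` represents the
component of `v` in `K`, at cost at most `√k * ‖v‖` by Cauchy–Schwarz. If `v` has at most two
further coordinates `i, j`, its component in `Kᗮ` is a combination of the projections `y i` and
`y j` of the corresponding basis vectors. By a triangle inequality it is then enough to represent
the vectors `σ • u i - τ • u j`, for signs `σ, τ` and `u i` the normalization of `y i`. Storing all
of them for each `K` would give about `n ^ t` vectors. Instead, go through these differences
`z e - z f`, `z (i, σ) = σ • u i`, in order of increasing norm, and store one only if the stored
ones do not already contain a walk of length three from `e` to `f`. Such a walk represents the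
skipped vector at cost at most three times its norm, by telescoping, and the stored pairs form a
bipartite graph without 4-cycles, hence number `O(n ^ (3 / 2))`.
-/

open Finset NormedSpace

section K22Free

variable {ι κ : Type*} {E : Finset (ι × κ)}

/-- `E`, viewed as the edge set of a bipartite graph between `ι` and `κ`, contains no copy of the
complete bipartite graph `K₂,₂`. -/
def IsK22Free (E : Finset (ι × κ)) : Prop :=
  ∀ ⦃i i' j j'⦄, (i, j) ∈ E → (i, j') ∈ E → (i', j) ∈ E → (i', j') ∈ E → i = i' ∨ j = j'

/-- The ends of `e` are joined by a walk of length three in the bipartite graph `E`. The walk may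
repeat vertices, so every `e ∈ E` qualifies. -/
def JoinedByThreeWalk (E : Finset (ι × κ)) (e : ι × κ) : Prop :=
  ∃ i' j', (e.1, j') ∈ E ∧ (i', j') ∈ E ∧ (i', e.2) ∈ E

lemma joinedByThreeWalk_of_mem {e : ι × κ} (he : e ∈ E) : JoinedByThreeWalk E e :=
  ⟨e.1, e.2, he, he, he⟩

lemma JoinedByThreeWalk.mono {E F : Finset (ι × κ)} (hEF : E ⊆ F) {e : ι × κ}
    (he : JoinedByThreeWalk E e) : JoinedByThreeWalk F e :=
  let ⟨i', j', h₁, h₂, h₃⟩ := he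
  ⟨i', j', hEF h₁, hEF h₂, hEF h₃⟩

lemma IsK22Free.insert [DecidableEq (ι × κ)] (hE : IsK22Free E) {e : ι × κ}
    (he : ¬ JoinedByThreeWalk E e) : IsK22Free (insert e E) := by
  have no_walk : ∀ i' j', (e.1, j') ∈ E → (i', j') ∈ E → (i', e.2) ∉ E :=
    fun i' j' h₁ h₂ h₃ ↦ he ⟨i', j', h₁, h₂, h₃⟩
  intro i i' j j' h₁ h₂ h₃ h₄
  have := hE (i := i) (i' := i') (j := j) (j' := j')
  grind

lemma exists_isK22Free_forall_joinedByThreeWalk {α : Type*} [LinearOrder α] (w : ι × κ → α)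
    (s : Finset (ι × κ)) :
    ∃ E ⊆ s, IsK22Free E ∧ ∀ e ∈ s, JoinedByThreeWalk {f ∈ E | w f ≤ w e} e := by
  classical
  induction s using Finset.induction_on_max_value w with
  | empty => exact ⟨∅, by simp [IsK22Free]⟩
  | insert e s _ hmax ih =>
    obtain ⟨E, hEs, hfree, hwalk⟩ := ih
    have filter_eq : {f ∈ E | w f ≤ w e} = E := filter_true_of_mem fun f hf ↦ hmax f (hEs hf)
    by_cases he : JoinedByThreeWalk E e
    · exact ⟨E, hEs.trans (subset_insert _ _), hfree,
        forall_mem_insert _ _ _ |>.2 ⟨by rwa [filter_eq], hwalk⟩⟩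
    · refine ⟨insert e E, insert_subset_insert _ hEs, hfree.insert he,
        forall_mem_insert _ _ _ |>.2 ⟨joinedByThreeWalk_of_mem (by simp), fun f hf ↦ ?_⟩⟩
      exact (hwalk f hf).mono (filter_subset_filter _ (subset_insert _ _))

variable [Fintype ι] [Fintype κ]

lemma IsK22Free.sum_card_offDiag_le [DecidableEq ι] [DecidableEq κ] (hE : IsK22Free E) :
    ∑ i, #({j | (i, j) ∈ E} : Finset κ).offDiag ≤ Fintype.card κ ^ 2 := by
  rw [← card_biUnion]
  · exact (card_le_univ _).trans_eq (by simp [sq])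
  · intro i _ i' _ hne
    refine disjoint_left.2 fun ⟨j, j'⟩ hi hi' ↦ ?_
    simp only [mem_offDiag, mem_filter, mem_univ, true_and] at hi hi'
    exact (hE hi.1 hi.2.1 hi'.1 hi'.2.1).elim hne hi.2.2

lemma IsK22Free.card_sq_le (hE : IsK22Free E) :
    #E ^ 2 ≤ Fintype.card ι * (Fintype.card κ ^ 2 + #E) := by
  classical
  let nbrs (i : ι) : Finset κ := {j | (i, j) ∈ E}
  have card_eq : #E = ∑ i, #(nbrs i) := by
    simp only [nbrs, card_filter, ← Fintype.sum_prod_type']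
    simp
  have sq_eq (i : ι) : #(nbrs i) ^ 2 = #(nbrs i).offDiag + #(nbrs i) := by
    rw [offDiag_card, sq, Nat.sub_add_cancel (Nat.le_mul_self _)]
  calc #E ^ 2 = (∑ i, #(nbrs i)) ^ 2 := by rw [card_eq]
    _ ≤ Fintype.card ι * ∑ i, #(nbrs i) ^ 2 := sq_sum_le_card_mul_sum_sq
    _ = Fintype.card ι * (∑ i, #(nbrs i).offDiag + #E) := by
      simp only [sq_eq, sum_add_distrib, card_eq]
    _ ≤ Fintype.card ι * (Fintype.card κ ^ 2 + #E) := by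
      gcongr
      exact hE.sum_card_offDiag_le

lemma IsK22Free.card_le (hE : IsK22Free E) :
    (#E : ℝ) ≤ Fintype.card ι + Fintype.card κ * √(Fintype.card ι) := by
  set a : ℝ := (Fintype.card ι : ℝ)
  set b : ℝ := (Fintype.card κ : ℝ)
  have card_sq : (#E : ℝ) ^ 2 ≤ a * (b ^ 2 + #E) := by
    simp only [a, b]
    exact_mod_cast hE.card_sq_le
  have sqrt_sq : √a ^ 2 = a := Real.sq_sqrt (by positivity)
  have : 0 ≤ a := by positivity
  have : 0 ≤ b * √a := by positivity
  by_contra! hlt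
  nlinarith

end K22Free

section HasL1Rep

variable {H : Type*} [SeminormedAddCommGroup H] [NormedSpace ℝ H] {S : Finset H} {v w : H}
  {b c : ℝ}

/-- `v` is a linear combination of the vectors in `S` whose ℓ1 cost, each vector being weighted by
its norm, is at most `b`. -/
def HasL1Rep (S : Finset H) (v : H) (b : ℝ) : Prop :=
  ∃ a : H → ℝ, v = ∑ d ∈ S, a d • d ∧ ∑ d ∈ S, |a d| * ‖d‖ ≤ b

namespace HasL1Rep

lemma mono (hv : HasL1Rep S v b) (hbc : b ≤ c) : HasL1Rep S v c :=
  let ⟨a, hva, hb⟩ := hv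
  ⟨a, hva, hb.trans hbc⟩

lemma mono_dictionary {T : Finset H} (hv : HasL1Rep S v b) (hST : S ⊆ T) : HasL1Rep T v b := by
  classical
  obtain ⟨a, rfl, hb⟩ := hv
  have inter_eq : T ∩ S = S := inter_eq_right.2 hST
  refine ⟨fun d ↦ if d ∈ S then a d else 0, ?_, ?_⟩
  · simp [ite_smul, sum_ite_mem, inter_eq]
  · simpa [apply_ite abs, ite_mul, sum_ite_mem, inter_eq] using hb

lemma zero (S : Finset H) : HasL1Rep S 0 0 := ⟨0, by simp, by simp⟩

lemma of_mem (hv : v ∈ S) : HasL1Rep S v ‖v‖ := by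
  classical
  exact ⟨Pi.single v 1, by simp [Pi.single_apply, hv],
    by simp [Pi.single_apply, apply_ite abs, hv]⟩

lemma add (hv : HasL1Rep S v b) (hw : HasL1Rep S w c) : HasL1Rep S (v + w) (b + c) := by
  obtain ⟨a, rfl, hb⟩ := hv
  obtain ⟨a', rfl, hc⟩ := hw
  refine ⟨a + a', by simp [add_smul, sum_add_distrib], ?_⟩
  calc ∑ d ∈ S, |(a + a') d| * ‖d‖ ≤ ∑ d ∈ S, (|a d| + |a' d|) * ‖d‖ := by
        gcongr; exact abs_add_le _ _
    _ = ∑ d ∈ S, |a d| * ‖d‖ + ∑ d ∈ S, |a' d| * ‖d‖ := by simp [add_mul, sum_add_distrib]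
    _ ≤ b + c := add_le_add hb hc

lemma smul (r : ℝ) (hv : HasL1Rep S v b) : HasL1Rep S (r • v) (|r| * b) := by
  obtain ⟨a, rfl, hb⟩ := hv
  refine ⟨r • a, by simp [smul_sum, mul_smul], ?_⟩
  calc ∑ d ∈ S, |(r • a) d| * ‖d‖ = |r| * ∑ d ∈ S, |a d| * ‖d‖ := by
        simp [abs_mul, mul_assoc, mul_sum]
    _ ≤ |r| * b := by gcongr

lemma neg (hv : HasL1Rep S v b) : HasL1Rep S (-v) b := by
  simpa using hv.smul (-1)

lemma sub (hv : HasL1Rep S v b) (hw : HasL1Rep S w c) : HasL1Rep S (v - w) (b + c) := by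
  simpa only [sub_eq_add_neg] using hv.add hw.neg

lemma sum {α : Type*} (s : Finset α) {v : α → H} {b : α → ℝ}
    (h : ∀ i ∈ s, HasL1Rep S (v i) (b i)) : HasL1Rep S (∑ i ∈ s, v i) (∑ i ∈ s, b i) := by
  classical
  induction s using Finset.induction_on with
  | empty => simpa using zero S
  | insert i s hi ih =>
    rw [sum_insert hi, sum_insert hi]
    exact (h i (mem_insert_self _ _)).add (ih fun j hj ↦ h j (mem_insert_of_mem hj))

end HasL1Rep

lemma exists_dictionary_sub {ι κ : Type*} [Fintype ι] [Fintype κ] (f : ι → H) (g : κ → H) :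
    ∃ S : Finset H, (∀ d ∈ S, ∃ i j, d = f i - g j) ∧
      (∀ i j, HasL1Rep S (f i - g j) (3 * ‖f i - g j‖)) ∧
      (#S : ℝ) ≤ Fintype.card ι + Fintype.card κ * √(Fintype.card ι) := by
  classical
  let diff (e : ι × κ) : H := f e.1 - g e.2
  obtain ⟨E, -, hfree, hwalk⟩ := exists_isK22Free_forall_joinedByThreeWalk (‖diff ·‖) univ
  refine ⟨E.image diff, ?_, fun i j ↦ ?_, le_trans (mod_cast card_image_le) hfree.card_le⟩
  · simp only [forall_mem_image]
    exact fun e _ ↦ ⟨e.1, e.2, rfl⟩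
  · obtain ⟨i', j', h₁, h₂, h₃⟩ := hwalk (i, j) (mem_univ _)
    have rep {e : ι × κ} (he : e ∈ {f ∈ E | ‖diff f‖ ≤ ‖diff (i, j)‖}) :
        HasL1Rep (E.image diff) (diff e) ‖diff (i, j)‖ :=
      (HasL1Rep.of_mem (mem_image_of_mem _ (mem_filter.1 he).1)).mono (mem_filter.1 he).2
    have telescope : f i - g j = diff (i, j') - diff (i', j') + diff (i', j) := by
      simp only [diff]; abel
    have rep_walk := ((rep h₁).sub (rep h₂)).add (rep h₃)
    rw [← telescope] at rep_walk
    exact rep_walk.mono (by simp only [diff]; linarith)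

end HasL1Rep

section Normalize

variable {H : Type*} [NormedAddCommGroup H] [NormedSpace ℝ H]

lemma norm_normalize_le_one (p : H) : ‖normalize p‖ ≤ 1 := by
  rcases eq_or_ne p 0 with rfl | hp
  · simp
  · exact (norm_normalize_eq_one_iff.2 hp).le

lemma norm_mul_norm_normalize_sub_normalize_le (p q : H) :
    ‖q‖ * ‖normalize p - normalize q‖ ≤ 2 * ‖p - q‖ :=
  calc ‖q‖ * ‖normalize p - normalize q‖ = ‖(p - q) - (‖p‖ - ‖q‖) • normalize p‖ := by
        rw [sub_smul, norm_smul_normalize, sub_sub_sub_cancel_left, ← norm_norm q, ← norm_smul,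
          smul_sub, norm_norm, norm_smul_normalize]
    _ ≤ ‖p - q‖ + |‖p‖ - ‖q‖| * ‖normalize p‖ := by
        rw [← Real.norm_eq_abs, ← norm_smul]
        exact norm_sub_le _ _
    _ ≤ ‖p - q‖ + ‖p - q‖ * 1 := by
        gcongr
        exacts [abs_norm_sub_norm_le p q, norm_normalize_le_one p]
    _ = 2 * ‖p - q‖ := by ring

lemma HasL1Rep.sub_of_normalize {S : Finset H} {p q : H} {c : ℝ} (hc : 0 ≤ c)
    (hp : HasL1Rep S (normalize p) c) (hq : HasL1Rep S (normalize q) c)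
    (hpq : HasL1Rep S (normalize p - normalize q) (c * ‖normalize p - normalize q‖)) :
    HasL1Rep S (p - q) (3 * c * ‖p - q‖) := by
  wlog hle : ‖q‖ ≤ ‖p‖ generalizing p q
  · have hqp := this hq hp (by simpa [norm_sub_rev] using hpq.neg) (le_of_not_ge hle)
    simpa [norm_sub_rev] using hqp.neg
  have decomp : (‖p‖ - ‖q‖) • normalize p + ‖q‖ • (normalize p - normalize q) = p - q := by
    rw [sub_smul, smul_sub, norm_smul_normalize, norm_smul_normalize, sub_add_sub_cancel]
  rw [← decomp]
  refine ((hp.smul (‖p‖ - ‖q‖)).add (hpq.smul ‖q‖)).mono ?_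
  rw [decomp, abs_norm]
  calc |‖p‖ - ‖q‖| * c + ‖q‖ * (c * ‖normalize p - normalize q‖)
      = c * (|‖p‖ - ‖q‖| + ‖q‖ * ‖normalize p - normalize q‖) := by ring
    _ ≤ c * (‖p - q‖ + 2 * ‖p - q‖) := mul_le_mul_of_nonneg_left (add_le_add
        (abs_norm_sub_norm_le p q) (norm_mul_norm_normalize_sub_normalize_le p q)) hc
    _ = 3 * c * ‖p - q‖ := by ring

lemma natCast_le_mul_sqrt (n : ℕ) : (n : ℝ) ≤ n * √n := by
  rcases n.eq_zero_or_pos with rfl | hn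
  · simp
  · exact le_mul_of_one_le_right n.cast_nonneg (Real.one_le_sqrt.2 (mod_cast hn))

variable {ι : Type*} [Fintype ι]

lemma exists_dictionary_span_pair (y : ι → H) :
    ∃ S : Finset H, (∀ d ∈ S, ∃ i j, d ∈ Submodule.span ℝ (y '' {i, j})) ∧
      (∀ i j, ∀ v ∈ Submodule.span ℝ (y '' {i, j}), HasL1Rep S v (9 * ‖v‖)) ∧
      (#S : ℝ) ≤ 9 * (Fintype.card ι * √(Fintype.card ι)) := by
  simp only [Set.image_pair]
  -- The sign `0` makes each `z e` itself one of the differences, `z e = z e - z (i, 0)`.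
  let z (e : ι × SignType) : H := (e.2 : ℝ) • normalize (y e.1)
  have normalize_smul_eq (a : ℝ) (i : ι) : normalize (a • y i) = z (i, SignType.sign a) :=
    normalize_smul a _
  obtain ⟨S, hspan, hrep, hcard⟩ := exists_dictionary_sub z z
  have rep (e : ι × SignType) : HasL1Rep S (z e) 3 := by
    have norm_le : ‖z e‖ ≤ 1 := by
      obtain ⟨i, σ⟩ := e
      have := norm_normalize_le_one (y i)
      cases σ <;> simp [z, this]
    have rep_sub_zero : HasL1Rep S (z e) (3 * ‖z e‖) := by
      simpa [z] using hrep e (e.1, 0)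
    exact rep_sub_zero.mono (by linarith)
  refine ⟨S, fun d hd ↦ ?_, fun i j v hv ↦ ?_, ?_⟩
  · obtain ⟨e, f, rfl⟩ := hspan d hd
    refine ⟨e.1, f.1, Submodule.mem_span_pair.2
      ⟨e.2 * ‖y e.1‖⁻¹, -(f.2 * ‖y f.1‖⁻¹), ?_⟩⟩
    simp only [z, NormedSpace.normalize, smul_smul, neg_smul, sub_eq_add_neg]
  · obtain ⟨a, b, rfl⟩ := Submodule.mem_span_pair.1 hv
    have rep_sub : HasL1Rep S (a • y i - -b • y j) (3 * 3 * ‖a • y i - -b • y j‖) := by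
      refine .sub_of_normalize (by norm_num) ?_ ?_ ?_ <;> simp only [normalize_smul_eq]
      exacts [rep _, rep _, hrep _ _]
    norm_num at rep_sub
    exact rep_sub
  · set n := Fintype.card ι
    have card_eq : Fintype.card (ι × SignType) = 3 * n := by
      rw [Fintype.card_prod, mul_comm, show Fintype.card SignType = 3 from rfl]
    have sqrt_le : √(3 * n : ℝ) ≤ 2 * √n := by
      rw [Real.sqrt_mul (by norm_num)]
      gcongr
      exact Real.sqrt_le_left (by norm_num) |>.2 (by norm_num)
    rw [card_eq] at hcard
    push_cast at hcard
    calc (#S : ℝ) ≤ 3 * n + 3 * n * √(3 * n : ℝ) := hcard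
      _ ≤ 3 * (n * √n) + 3 * n * (2 * √n) := by gcongr; exact natCast_le_mul_sqrt n
      _ = 9 * (n * √n) := by ring

end Normalize

section InnerProductSpace

variable {H : Type*} [NormedAddCommGroup H] [InnerProductSpace ℝ H]

lemma exists_dictionary_submodule (K : Submodule ℝ H) [FiniteDimensional ℝ K] :
    ∃ S : Finset H, (∀ d ∈ S, d ∈ K) ∧
      (∀ v ∈ K, HasL1Rep S v (√(Module.finrank ℝ K) * ‖v‖)) ∧ #S ≤ Module.finrank ℝ K := by
  classical
  let b := stdOrthonormalBasis ℝ K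
  let c (v : K) (i : Fin (Module.finrank ℝ K)) : ℝ := inner ℝ (b i) v
  refine ⟨univ.image fun i ↦ (b i : H), by simp, fun v hv ↦ ?_,
    card_image_le.trans (by simp)⟩
  lift v to K using hv
  have expansion : (v : H) = ∑ i, c v i • (b i : H) := by
    simpa [c] using congrArg Subtype.val (b.sum_repr' v).symm
  have sum_abs_le : ∑ i, |c v i| ≤ √(Module.finrank ℝ K) * ‖v‖ := by
    refine le_of_sq_le_sq ?_ (by positivity)
    calc (∑ i, |c v i|) ^ 2 ≤ Module.finrank ℝ K * ∑ i, |c v i| ^ 2 := by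
          simpa using sq_sum_le_card_mul_sum_sq (s := univ) (f := fun i ↦ |c v i|)
      _ = (√(Module.finrank ℝ K) * ‖v‖) ^ 2 := by
          simp only [sq_abs, c, b.sum_sq_inner_right, mul_pow,
            Real.sq_sqrt (Nat.cast_nonneg _)]
  have rep_term (i) : HasL1Rep (univ.image fun i ↦ (b i : H)) (c v i • (b i : H)) |c v i| := by
    have norm_eq : ‖(b i : H)‖ = 1 := b.orthonormal.1 i
    simpa [norm_eq] using
      (HasL1Rep.of_mem (mem_image_of_mem (fun i ↦ (b i : H)) (mem_univ i))).smul (c v i)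
  have rep_sum := HasL1Rep.sum univ fun i _ ↦ rep_term i
  rw [← expansion] at rep_sum
  exact rep_sum.mono sum_abs_le

section Projection

variable (K : Submodule ℝ H) [K.HasOrthogonalProjection]

lemma span_image_starProjection_orthogonal_le (s : Set H) :
    Submodule.span ℝ (Kᗮ.starProjection '' s) ≤ K ⊔ Submodule.span ℝ s := by
  rw [Submodule.span_le, Set.image_subset_iff]
  intro x hx
  have proj_eq : Kᗮ.starProjection x = x - K.starProjection x :=
    eq_sub_of_add_eq' (K.starProjection_add_starProjection_orthogonal x)
  rw [Set.mem_preimage, proj_eq]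
  exact sub_mem (Submodule.mem_sup_right (Submodule.subset_span hx))
    (Submodule.mem_sup_left (K.starProjection_apply_mem x))

lemma starProjection_orthogonal_mem_span_image {s : Set H} {v : H}
    (hv : v ∈ K ⊔ Submodule.span ℝ s) :
    Kᗮ.starProjection v ∈ Submodule.span ℝ (Kᗮ.starProjection '' s) := by
  obtain ⟨p, hp, q, hq, rfl⟩ := Submodule.mem_sup.1 hv
  rw [map_add, Submodule.starProjection_orthogonal_apply_eq_zero hp, zero_add]
  exact Submodule.image_span_subset_span Kᗮ.starProjection.toLinearMap s
    (Set.mem_image_of_mem _ hq)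

end Projection

variable {ι : Type*}

lemma exists_dictionary_sup_span_pair [Fintype ι] (x : ι → H) (K : Submodule ℝ H)
    [FiniteDimensional ℝ K] :
    ∃ S : Finset H, (∀ d ∈ S, d ∈ K ∨ ∃ i j, d ∈ K ⊔ Submodule.span ℝ (x '' {i, j})) ∧
      (∀ i j, ∀ v ∈ K ⊔ Submodule.span ℝ (x '' {i, j}),
        HasL1Rep S v ((√(Module.finrank ℝ K) + 9) * ‖v‖)) ∧
      (#S : ℝ) ≤ Module.finrank ℝ K + 9 * (Fintype.card ι * √(Fintype.card ι)) := by
  classical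
  obtain ⟨B, hBK, hBrep, hBcard⟩ := exists_dictionary_submodule K
  obtain ⟨P, hPspan, hPrep, hPcard⟩ :=
    exists_dictionary_span_pair (Kᗮ.starProjection ∘ x)
  simp only [Set.image_comp] at hPspan hPrep
  refine ⟨B ∪ P, fun d hd ↦ ?_, fun i j v hv ↦ ?_, ?_⟩
  · refine (mem_union.1 hd).imp (hBK d) fun hdP ↦ ?_
    obtain ⟨i, j, hij⟩ := hPspan d hdP
    exact ⟨i, j, span_image_starProjection_orthogonal_le K _ hij⟩
  · have rep_K := (hBrep _ (K.starProjection_apply_mem v)).mono_dictionary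
      (subset_union_left (s₂ := P))
    have rep_orthogonal := (hPrep i j _ (starProjection_orthogonal_mem_span_image K hv)
      ).mono_dictionary (subset_union_right (s₁ := B))
    have rep := rep_K.add rep_orthogonal
    rw [K.starProjection_add_starProjection_orthogonal] at rep
    refine rep.mono ?_
    rw [add_mul]
    gcongr
    exacts [K.norm_starProjection_apply_le v, Kᗮ.norm_starProjection_apply_le v]
  · calc (#(B ∪ P) : ℝ) ≤ #B + #P := mod_cast card_union_le B P
      _ ≤ _ := add_le_add (mod_cast hBcard) hPcard

lemma finrank_span_image_le_card (x : ι → H) (s : Finset ι) :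
    Module.finrank ℝ (Submodule.span ℝ (x '' s)) ≤ #s := by
  classical
  rw [← coe_image]
  exact (finrank_span_finset_le_card _).trans card_image_le

lemma exists_subset_image_union_pair [DecidableEq ι] [Nonempty ι] {s : Finset ι} {k : ℕ}
    (hs : #s ≤ k + 2) : ∃ (T : Fin k → ι) (i j : ι), s ⊆ univ.image T ∪ {i, j} := by
  obtain ⟨e⟩ : Nonempty (s ↪ Fin (k + 2)) := Function.Embedding.nonempty_of_card_le (by simpa)
  let g : Fin (k + 2) → ι := Function.extend e (↑) fun _ ↦ Classical.arbitrary ι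
  refine ⟨fun l ↦ g l.succ.succ, g 0, g 1, fun a ha ↦ ?_⟩
  obtain ⟨l, rfl⟩ : ∃ l, g l = a := ⟨e ⟨a, ha⟩, e.injective.extend_apply _ _ _⟩
  refine Fin.cases ?_ (Fin.cases ?_ fun l ↦ ?_) l <;> simp

lemma exists_dictionary_span_image [Fintype ι] (x : ι → H) (k : ℕ) :
    ∃ S : Finset H,
      (∀ d ∈ S, ∃ s : Finset ι, #s ≤ k + 2 ∧ d ∈ Submodule.span ℝ (x '' s)) ∧
      (∀ s : Finset ι, #s ≤ k + 2 → ∀ v ∈ Submodule.span ℝ (x '' s),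
        HasL1Rep S v ((√k + 9) * ‖v‖)) ∧
      (#S : ℝ) ≤ 10 * (Fintype.card ι ^ k * (Fintype.card ι * √(Fintype.card ι))) := by
  classical
  let U (T : Fin k → ι) : Finset ι := univ.image T
  have card_U_le (T) : #(U T) ≤ k := card_image_le.trans (by simp)
  have span_union_pair (T) (i j : ι) : Submodule.span ℝ (x '' U T) ⊔
      Submodule.span ℝ (x '' {i, j}) = Submodule.span ℝ (x '' ↑(U T ∪ {i, j})) := by
    rw [coe_union, Set.image_union, Submodule.span_union, coe_pair]
  have finiteDimensional_span (T) : FiniteDimensional ℝ (Submodule.span ℝ (x '' U T)) :=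
    .span_of_finite ℝ (Set.toFinite _)
  choose S hspan hrep hcard using fun T ↦
    exists_dictionary_sup_span_pair x (Submodule.span ℝ (x '' U T))
  refine ⟨univ.biUnion S, fun d hd ↦ ?_, fun s hs v hv ↦ ?_, ?_⟩
  · obtain ⟨T, -, hdT⟩ := mem_biUnion.1 hd
    rcases hspan T d hdT with hdU | ⟨i, j, hij⟩
    · exact ⟨U T, (card_U_le T).trans (by simp), hdU⟩
    · exact ⟨U T ∪ {i, j}, (card_union_le _ _).trans (add_le_add (card_U_le T) card_le_two),
        span_union_pair T i j ▸ hij⟩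
  · rcases s.eq_empty_or_nonempty with rfl | ⟨i₀, -⟩
    · obtain rfl : v = 0 := by simpa using hv
      simpa using HasL1Rep.zero (univ.biUnion S)
    have : Nonempty ι := ⟨i₀⟩
    obtain ⟨T, i, j, hsT⟩ := exists_subset_image_union_pair hs
    have hvT : v ∈ Submodule.span ℝ (x '' U T) ⊔ Submodule.span ℝ (x '' {i, j}) := by
      rw [span_union_pair]
      exact Submodule.span_mono (Set.image_mono (mod_cast hsT)) hv
    refine ((hrep T i j v hvT).mono_dictionary (subset_biUnion_of_mem S (mem_univ T))).mono ?_
    gcongr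
    exact (finrank_span_image_le_card x _).trans (card_U_le T)
  · set n := Fintype.card ι
    have card_S_le (T) : (#(S T) : ℝ) ≤ 10 * (n * √n) := by
      have finrank_le : (Module.finrank ℝ (Submodule.span ℝ (x '' U T)) : ℝ) ≤ n :=
        mod_cast (finrank_span_image_le_card x _).trans (card_le_univ _)
      linarith [hcard T, natCast_le_mul_sqrt n]
    calc (#(univ.biUnion S) : ℝ) ≤ ∑ T, (#(S T) : ℝ) := mod_cast card_biUnion_le
      _ ≤ ∑ _ : Fin k → ι, 10 * (n * √n) := sum_le_sum fun T _ ↦ card_S_le T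
      _ = 10 * (n ^ k * (n * √n)) := by simp [n]; ring

end InnerProductSpace

section Coordinates

variable {n t : ℕ}

lemma sparseVec_iff_exists_mem_span_image {v : Fin n → ℝ} :
    SparseVec t v ↔ ∃ s : Finset (Fin n), #s ≤ t ∧
      v ∈ Submodule.span ℝ (Pi.basisFun ℝ (Fin n) '' s) := by
  have ncard_eq : {i | v i ≠ 0}.ncard = #((Pi.basisFun ℝ (Fin n)).repr v).support := by
    rw [← Set.ncard_coe_finset]
    congr 1
    ext i
    simp
  simp only [SparseVec, ncard_eq, Module.Basis.mem_span_image, coe_subset]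
  exact ⟨fun h ↦ ⟨_, h, subset_rfl⟩, fun ⟨s, hs, hsub⟩ ↦ (card_le_card hsub).trans hs⟩

lemma IsL1Rep.mono {A : Matrix (Fin n) (Fin n) ℝ} {N : ℕ} {D : Fin N → Fin n → ℝ} {b c : ℝ}
    (hD : IsL1Rep t b A D) (hbc : b ≤ c) : IsL1Rep t c A D := fun v hv ↦
  let ⟨a, hva, hb⟩ := hD v hv
  ⟨a, hva, hb.trans (mul_le_mul_of_nonneg_right hbc (Real.sqrt_nonneg _))⟩

lemma sum_equivFin_symm {α M : Type*} [AddCommMonoid M] (s : Finset α) (f : α → M) :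
    ∑ i, f (s.equivFin.symm i) = ∑ a ∈ s, f a := by
  rw [s.equivFin.symm.sum_comp fun a : s ↦ f a, sum_coe_sort s f]

lemma norm_toNormedAddCommGroup {A : Matrix (Fin n) (Fin n) ℝ} (hA : A.PosDef)
    (v : Fin n → ℝ) : (A.toNormedAddCommGroup hA).norm v = normSigma A v := by
  change √((A *ᵥ v) ⬝ᵥ star v) = √(v ⬝ᵥ A *ᵥ v)
  rw [dotProduct_comm, star_trivial]

lemma pow_mul_mul_sqrt_eq_rpow (n k : ℕ) :
    (n : ℝ) ^ k * (n * √n) = (n : ℝ) ^ (((k + 2 : ℕ) : ℝ) - 1 / 2) := by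
  have exponent_eq : ((k + 2 : ℕ) : ℝ) - 1 / 2 = (k + 1 : ℕ) + 1 / 2 := by push_cast; ring
  rw [exponent_eq, Real.rpow_add_of_nonneg (by positivity) (by positivity) (by positivity),
    Real.rpow_natCast, ← Real.sqrt_eq_rpow, pow_succ, mul_assoc]

lemma sqrt_add_nine_le (hn : 2 ≤ n) (ht : 1 ≤ t) :
    √t + 9 ≤ 20 * (t : ℝ) ^ ((3 : ℝ) / 2) * Real.log n := by
  have one_le : (1 : ℝ) ≤ (t : ℝ) ^ ((3 : ℝ) / 2) :=
    Real.one_le_rpow (mod_cast ht) (by norm_num)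
  have sqrt_le : √t ≤ (t : ℝ) ^ ((3 : ℝ) / 2) := by
    rw [Real.sqrt_eq_rpow]
    exact Real.rpow_le_rpow_of_exponent_le (mod_cast ht) (by norm_num)
  have log_ge : 1 / 2 ≤ Real.log n := by
    have := Real.log_le_log two_pos (show (2 : ℝ) ≤ n from mod_cast hn)
    linarith [Real.log_two_gt_d9]
  nlinarith

theorem stmt19_general (ht : 2 ≤ t) {A : Matrix (Fin n) (Fin n) ℝ} (hA : A.PosDef) :
    ∃ (N : ℕ) (D : Fin N → Fin n → ℝ),
      IsL1Rep t (√t + 9) A D ∧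
        (N : ℝ) ≤ 10 * (n : ℝ) ^ ((t : ℝ) - 1 / 2) ∧ ∀ i, SparseVec t (D i) := by
  obtain ⟨k, rfl⟩ := Nat.exists_eq_add_of_le' ht
  let := A.toNormedAddCommGroup hA
  let := A.toInnerProductSpace hA.posSemidef
  obtain ⟨S, hspan, hrep, hcard⟩ := exists_dictionary_span_image (Pi.basisFun ℝ (Fin n)) k
  refine ⟨#S, fun i ↦ S.equivFin.symm i,
    IsL1Rep.mono (b := √k + 9) (fun v hv ↦ ?_) (by gcongr; simp), ?_, fun i ↦ ?_⟩
  · obtain ⟨s, hs, hvs⟩ := sparseVec_iff_exists_mem_span_image.1 hv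
    obtain ⟨a, hva, hb⟩ := hrep s hs v hvs
    simp only [norm_toNormedAddCommGroup hA] at hb
    refine ⟨fun i ↦ a (S.equivFin.symm i), ?_, ?_⟩
    · rwa [sum_equivFin_symm S fun d ↦ a d • d]
    · rwa [sum_equivFin_symm S fun d ↦ |a d| * normSigma A d]
  · simpa only [pow_mul_mul_sqrt_eq_rpow, Fintype.card_fin] using hcard
  · exact sparseVec_iff_exists_mem_span_image.2 (hspan _ (S.equivFin.symm i).2)

end Coordinates

/-- every positive definite Σ has a (t, C t^{3/2} log n)-ℓ1-representation
of size at most C n^{t-1/2}, all of whose elements are t-sparse. -/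
theorem stmt19 : ∃ C : ℝ, 0 < C ∧ ∀ (n t : ℕ), 2 ≤ n → 2 ≤ t →
    ∀ A : Matrix (Fin n) (Fin n) ℝ, A.PosDef →
      ∃ (N : ℕ) (D : Fin N → Fin n → ℝ),
        IsL1Rep t (C * (t : ℝ) ^ ((3 : ℝ) / 2) * Real.log n) A D ∧
          (N : ℝ) ≤ C * (n : ℝ) ^ ((t : ℝ) - 1 / 2) ∧ ∀ i, SparseVec t (D i) :=
  ⟨20, by norm_num, fun _ _ hn ht _ hA ↦
    let ⟨N, D, hD, hN, hsparse⟩ := stmt19_general ht hA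
    ⟨N, D, hD.mono (sqrt_add_nine_le hn (by lia)), hN.trans (by gcongr; norm_num), hsparse⟩⟩
end
end
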